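/- arXiv:2006.16213 — 2 statements merged into one kernel-verified Lean document; each statement's English description precedes it below -/
import Mathlib

section
/- Let F : [0,∞) → [0,∞). If F∘Λ is a Pólya frequency function for every Pólya frequency function Λ, then there exists c > 0 such that F(x) = c·x for all x ≥ 0. Conversely, every dilation F(x) = c·x with c > 0 maps Pólya frequency functions to Pólya frequency functions. -/
/-- A kernel on linearly ordered sets is totally non-negative if all matrices
obtained by evaluating it on increasing tuples have non-negative determinant. -/
def IsTNKernel {X Y : Type*} [LinearOrder X] [LinearOrder Y] (K : X → Y → ℝ) : Prop :=
  ∀ (n : ℕ) (x : Fin n → X) (y : Fin n → Y), StrictMono x → StrictMono y →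
    0 ≤ (Matrix.of fun i j : Fin n => K (x i) (y j)).det

/-- A Pólya frequency function: a Lebesgue-integrable function `ℝ → [0,∞)`,
non-zero at two or more points, whose associated Toeplitz kernel is totally
non-negative. -/
def IsPolyaFrequencyFunction (Λ : ℝ → ℝ) : Prop :=
  MeasureTheory.Integrable Λ ∧ (∀ x, 0 ≤ Λ x) ∧
  (∃ a b : ℝ, a ≠ b ∧ Λ a ≠ 0 ∧ Λ b ≠ 0) ∧
  IsTNKernel fun x y : ℝ => Λ (x - y)

theorem TN_bidiag {Y : Type*} [LinearOrder Y] (K : ℕ → Y → ℝ) (hK : IsTNKernel K) (a c : ℕ → ℝ)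
    (ha : ∀ i, 0 ≤ a i) (hc : ∀ i, 0 ≤ c i) :
    IsTNKernel (fun i y => a i * K (i-1) y + c i * K i y) := by
  intro n x y hx hy
  have key : (Matrix.of fun i j : Fin n => a (x i) * K (x i - 1) (y j) + c (x i) * K (x i) (y j))
     = (fun i => a (x i) • fun j => K (x i - 1) (y j)) + (fun i => c (x i) • fun j => K (x i) (y j)) := by
    ext i j; simp
  rw [key]
  have h2 := (Matrix.detRowAlternating (n := Fin n) (R := ℝ)).map_add_univ
    (fun i => a (x i) • fun j => K (x i - 1) (y j)) (fun i => c (x i) • fun j => K (x i) (y j))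
  change 0 ≤ Matrix.detRowAlternating _
  rw [h2]
  refine Finset.sum_nonneg fun s _ => ?_
  let σ : Fin n → ℕ := fun i => if i ∈ s then x i - 1 else x i
  have e : (s.piecewise (fun i => a (x i) • fun j => K (x i - 1) (y j))
      (fun i => c (x i) • fun j => K (x i) (y j)) : Fin n → Fin n → ℝ)
      = fun i => (if i ∈ s then a (x i) else c (x i)) • fun j => K (σ i) (y j) := by
    ext i j
    by_cases h : i ∈ s <;> simp [Finset.piecewise, h, σ]
  rw [e]
  have e2 := (Matrix.detRowAlternating (n := Fin n) (R := ℝ)).toMultilinearMap.map_smul_univ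
    (fun i => (if i ∈ s then a (x i) else c (x i))) (fun i j => K (σ i) (y j))
  simp only [AlternatingMap.coe_multilinearMap] at e2
  rw [e2, smul_eq_mul]
  refine mul_nonneg (Finset.prod_nonneg fun i _ => by split_ifs <;> simp [ha, hc]) ?_
  have hmono : Monotone σ := by
    intro i j hij
    rcases hij.eq_or_lt with h | h
    · rw [h]
    · have := hx h
      simp only [σ]
      split_ifs <;> omega
  by_cases hinj : Function.Injective σ
  · exact hK n σ y (hmono.strictMono_of_injective hinj) hy
  · simp only [Function.Injective, not_forall] at hinj
    obtain ⟨i, j, hij, hne⟩ := hinj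
    rw [AlternatingMap.map_eq_zero_of_eq _ _ (i := i) (j := j) (by simp [hij]) hne]

theorem TN_cumul {Y : Type*} [LinearOrder Y] (K R : ℕ → Y → ℝ) (hK : IsTNKernel K) (a c : ℕ → ℝ)
    (ha : ∀ i, 0 ≤ a i) (hc : ∀ i, 0 ≤ c i) (h0 : ∀ y, R 0 y = K 0 y)
    (hR : ∀ i y, R (i+1) y = a (i+1) * R i y + c (i+1) * K (i+1) y) : IsTNKernel R := by
  have key : ∀ N, IsTNKernel (fun i y => if i ≤ N then R i y else K i y) := by
    intro N
    induction N with
    | zero =>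
      convert hK using 3 with i y
      by_cases h : i = 0 <;> simp [h, h0]
    | succ N ih =>
      convert TN_bidiag _ ih (fun i => if i = N+1 then a i else 0)
        (fun i => if i = N+1 then c i else 1) (fun i => by split_ifs <;> simp [ha])
        (fun i => by split_ifs <;> simp [hc]) using 3 with i y
      by_cases h : i = N + 1
      · subst h; simp [hR]
      · have : i ≤ N + 1 ↔ i ≤ N := by omega
        simp [h, this]
  intro n x y hx hy
  have := key (Finset.univ.sup x) n x y hx hy
  convert this using 4 with i
  funext j
  dsimp only
  rw [if_pos (Finset.le_sup (Finset.mem_univ _))]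

theorem TN_scale {X Y : Type*} [LinearOrder X] [LinearOrder Y] (K : X → Y → ℝ) (hK : IsTNKernel K)
    (r : X → ℝ) (s : Y → ℝ) (hr : ∀ i, 0 ≤ r i) (hs : ∀ i, 0 ≤ s i) :
    IsTNKernel (fun x y => r x * (s y * K x y)) := by
  intro n x y hx hy
  have h1 := Matrix.det_mul_column (fun i => r (x i)) (Matrix.of fun i j => s (y j) * K (x i) (y j))
  have h2 := Matrix.det_mul_row (fun i => s (y i)) (Matrix.of fun i j => K (x i) (y j))
  simp only [Matrix.of_apply] at h1 h2
  rw [h1, h2]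
  exact mul_nonneg (Finset.prod_nonneg fun i _ => hr _)
    (mul_nonneg (Finset.prod_nonneg fun i _ => hs _) (hK n x y hx hy))

theorem TN_transpose {X Y : Type*} [LinearOrder X] [LinearOrder Y] (K : X → Y → ℝ)
    (hK : IsTNKernel K) : IsTNKernel (fun y x => K x y) := by
  intro n x y hx hy
  have := hK n y x hy hx
  rw [← Matrix.det_transpose] at this
  exact this

theorem TN_id : IsTNKernel (fun i j : ℕ => if i = j then (1:ℝ) else 0) := by
  intro n x y hx hy
  by_cases h : ∀ i, ∃ j, y j = x i
  · have hxy : x = y := by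
      have hsub : Set.range x ⊆ Set.range y := by
        rintro _ ⟨i, rfl⟩; exact h i
      have hfin : Set.range x = Set.range y := by
        apply Set.eq_of_subset_of_ncard_le hsub _ (Set.finite_range y)
        rw [← Set.image_univ, ← Set.image_univ, Set.ncard_image_of_injective _ hx.injective,
          Set.ncard_image_of_injective _ hy.injective]
      exact (StrictMono.range_inj hx hy).1 hfin
    subst hxy
    have : (Matrix.of fun i j : Fin n => if x i = x j then (1:ℝ) else 0) = 1 := by
      ext i j
      simp [Matrix.one_apply, hx.injective.eq_iff]
    rw [this]; simp
  · push Not at h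
    obtain ⟨i, hi⟩ := h
    rw [Matrix.det_eq_zero_of_row_eq_zero i]
    intro j
    simp [Ne.symm (hi j)]

theorem TN_lower : IsTNKernel (fun i j : ℕ => if j ≤ i then (1:ℝ) else 0) := by
  refine TN_cumul _ _ TN_id (fun _ => 1) (fun _ => 1) (by simp) (by simp) ?_ ?_
  · intro y; simp [eq_comm]
  · intro i y
    by_cases h : y ≤ i
    · have : i + 1 ≠ y := by omega
      have h3 : y ≤ i + 1 := by omega
      simp [h, this, h3]
    · by_cases h2 : i + 1 = y
      · simp [h, h2]
      · have : ¬ y ≤ i + 1 := by omega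
        simp [h, h2, this]

theorem exists_grid (P : Finset ℝ) : ∃ p : ℕ → ℝ, StrictMono p ∧ ∀ x ∈ P, ∃ i, p i = x := by
  classical
  obtain ⟨M, hM⟩ := P.bddAbove
  set N := P.card with hN
  let e := P.orderEmbOfFin hN.symm
  refine ⟨fun i => if h : i < N then e ⟨i, h⟩ else M + (i + 1), ?_, ?_⟩
  · refine strictMono_nat_of_lt_succ fun i => ?_
    by_cases h1 : i + 1 < N
    · have h0 : i < N := by omega
      simp only [h1, h0, dif_pos]
      exact e.strictMono (by simp [Fin.lt_def])
    · by_cases h0 : i < N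
      · simp only [h1, h0, dif_pos, dif_neg, not_false_eq_true]
        have := hM (P.orderEmbOfFin_mem hN.symm ⟨i, h0⟩)
        have hi : (0:ℝ) ≤ i := by positivity
        push_cast
        change P.orderEmbOfFin hN.symm ⟨i, h0⟩ < _
        linarith
      · simp only [h1, h0, dif_neg, not_false_eq_true]
        push_cast; linarith
  · intro x hx
    have : x ∈ Set.range e := by
      rw [P.range_orderEmbOfFin hN.symm]; exact hx
    obtain ⟨i, hi⟩ := this
    exact ⟨i, by simp [hi]⟩

theorem TN_of_grid (K : ℝ → ℝ → ℝ)
    (h : ∀ p : ℕ → ℝ, StrictMono p → IsTNKernel (fun i j => K (p i) (p j))) : IsTNKernel K := by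
  classical
  intro n x y hx hy
  obtain ⟨p, hp, hP⟩ := exists_grid (Finset.univ.image x ∪ Finset.univ.image y)
  choose u hu using fun i => hP (x i) (by simp)
  choose v hv using fun i => hP (y i) (by simp)
  have := h p hp n u v (fun i j hij => by rw [← hp.lt_iff_lt, hu, hu]; exact hx hij)
    (fun i j hij => by rw [← hp.lt_iff_lt, hv, hv]; exact hy hij)
  simpa [hu, hv] using this

theorem TN_step : IsTNKernel (fun x y : ℝ => if y ≤ x then (1:ℝ) else 0) := by
  refine TN_of_grid _ fun p hp => ?_
  simpa [hp.le_iff_le] using TN_lower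

theorem TN_G (b : ℝ) (hb : 0 < b) (p : ℕ → ℝ) (hp : StrictMono p) :
    IsTNKernel (fun i j : ℕ => if j ≤ i then (1:ℝ) else Real.exp (b * (p i - p j))) := by
  have h1 := TN_scale _ (TN_transpose _ TN_lower) (fun _ => 1) (fun j => Real.exp (- b * p j)) (by simp)
    (fun j => (Real.exp_pos _).le)
  have h2 := TN_bidiag _ h1 (fun _ => 0) (fun i => if i = 0 then Real.exp (b * p 0) else 
    Real.exp (b * p i) - Real.exp (b * p (i-1))) (by simp) (fun i => by
      split_ifs
      · positivity
      · have : p (i-1) ≤ p i := hp.monotone (by omega)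
        have : Real.exp (b * p (i-1)) ≤ Real.exp (b * p i) := by gcongr
        linarith)
  refine TN_cumul _ _ h2 (fun _ => 1) (fun _ => 1) (by simp) (by simp) ?_ ?_
  · intro y
    rcases Nat.eq_zero_or_pos y with h | h
    · subst h; simp [← Real.exp_add]
    · have : ¬ y ≤ 0 := by omega
      simp only [this]
      simp [← Real.exp_add]; ring_nf
  · intro i y
    by_cases h : y ≤ i
    · have h3 : y ≤ i + 1 := by omega
      have h4 : ¬ i + 1 ≤ y := by omega
      simp [h, h3, h4]
    · have h4 : i + 1 ≤ y := by omega
      have e : ∀ j, Real.exp (b * (p j - p y)) = Real.exp (b * p j) * Real.exp (-(b * p y)) := by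
        intro j; rw [← Real.exp_add]; ring_nf
      by_cases h2 : i + 1 = y
      · subst h2
        have := e (i+1)
        simp at this
        simp [e]
        linarith
      · have h5 : ¬ y ≤ i + 1 := by omega
        simp [h, h4, h5, e]; ring

/-- the three-factor function -/
noncomputable def Bq (b : ℝ) (x : ℝ) : ℝ :=
  if 0 ≤ x then 1 - b / (1 + b) * Real.exp (-x) else 1 / (1 + b) * Real.exp (b * x)

theorem TN_B (b : ℝ) (hb : 0 < b) : IsTNKernel (fun x y : ℝ => Bq b (x - y)) := by
  refine TN_of_grid _ fun p hp => ?_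
  have hG := TN_G b hb p hp
  let u : ℕ → ℝ := fun i => Real.exp (-(p i - p (i-1)))
  let w : ℕ → ℝ := fun i => Real.exp (-(b * (p i - p (i-1))))
  have hd : ∀ i, 0 ≤ p i - p (i-1) := fun i => sub_nonneg.2 (hp.monotone (by omega))
  have hw : ∀ i, 0 ≤ 1 - w i := fun i => by
    have : w i ≤ 1 := Real.exp_le_one_iff.2 (by have := hd i; nlinarith)
    linarith
  have hu0 : ∀ i, 0 < u i := fun i => Real.exp_pos _
  have hw0 : ∀ i, 0 < w i := fun i => Real.exp_pos _
  have hA : ∀ i, 0 ≤ 1 - u i - 1/(1+b) * (1 - u i * w i) := fun i => by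
    have h := one_add_mul_self_le_rpow_one_add (s := u i - 1) (by have := hu0 i; linarith)
      (p := 1 + b) (by linarith)
    have e : (1 + (u i - 1)) ^ (1+b) = u i * w i := by
      rw [add_sub_cancel, Real.rpow_def_of_pos (hu0 i)]
      simp only [u, w]
      rw [Real.log_exp, ← Real.exp_add]; ring_nf
    rw [e] at h
    have : 1/(1+b) * (1 - u i * w i) ≤ 1 - u i := by
      rw [one_div, inv_mul_le_iff₀ (by linarith)]
      linarith
    linarith
  have hB : ∀ i, 0 ≤ 1/(1+b) * (1 - u i * w i) - w i * (1 - u i) := fun i => by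
    have h := one_add_mul_self_le_rpow_one_add (s := (u i)⁻¹ - 1)
      (by have := inv_pos.2 (hu0 i); linarith) (p := 1 + b) (by linarith)
    have e : (1 + ((u i)⁻¹ - 1)) ^ (1+b) = (u i * w i)⁻¹ := by
      rw [add_sub_cancel, Real.rpow_def_of_pos (inv_pos.2 (hu0 i))]
      simp only [u, w]
      rw [← Real.exp_neg, Real.log_exp, ← Real.exp_add, ← Real.exp_neg]; ring_nf
    rw [e] at h
    have hp1 : 0 < u i * w i := mul_pos (hu0 i) (hw0 i)
    have h3 := mul_le_mul_of_nonneg_left h hp1.le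
    rw [mul_inv_cancel₀ hp1.ne'] at h3
    have e3 : u i * w i * (1 + (1 + b) * ((u i)⁻¹ - 1)) = u i * w i + (1+b) * (w i * (1 - u i)) := by
      have := (hu0 i).ne'
      field_simp
    rw [e3] at h3
    have : w i * (1 - u i) ≤ 1/(1+b) * (1 - u i * w i) := by
      rw [one_div, ← div_eq_inv_mul, le_div_iff₀ (by linarith)]
      linarith
    linarith
  have h2 := TN_bidiag _ hG (fun i => if i = 0 then 0 else 
      (1 - u i - 1/(1+b) * (1 - u i * w i)) / (1 - w i))
    (fun i => if i = 0 then 1/(1+b) else (1/(1+b) * (1 - u i * w i) - w i * (1 - u i)) / (1 - w i))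
    (fun i => by
      split_ifs
      · simp
      · exact div_nonneg (hA i) (hw i))
    (fun i => by
      split_ifs
      · positivity
      · exact div_nonneg (hB i) (hw i))
  refine TN_cumul _ _ h2 (fun i => u i) (fun _ => 1) (fun i => (hu0 i).le) (by simp) ?_ ?_
  · intro y
    rcases Nat.eq_zero_or_pos y with h | h
    · subst h
      simp [Bq]; field_simp; ring
    · have h1 : ¬ y ≤ 0 := by omega
      have h3 : p 0 < p y := hp h
      have h4 : ¬ p y ≤ p 0 := by linarith
      simp [Bq, h1, h4]
  · intro i y
    have hpi : p i < p (i+1) := hp (by omega)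
    have hw1 : 1 - w (i+1) ≠ 0 := by
      have : w (i+1) < 1 := by
        apply Real.exp_lt_one_iff.2
        simp only [Nat.add_sub_cancel]
        nlinarith
      linarith
    simp only [Nat.add_sub_cancel, Nat.succ_ne_zero, if_false, one_mul]
    have hb1 : 1 + b ≠ 0 := by positivity
    by_cases h : y ≤ i
    · have h3 : y ≤ i + 1 := by omega
      have h5 : p y ≤ p i := hp.monotone h
      have h6 : p y ≤ p (i+1) := hp.monotone h3
      have e : Real.exp (-(p (i+1) - p y)) = u (i+1) * Real.exp (-(p i - p y)) := by
        simp only [u, Nat.add_sub_cancel]; rw [← Real.exp_add]; ring_nf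
      simp only [Bq, h, h3, if_true, sub_nonneg, h5, h6, e]
      field_simp
      ring
    · have h7 : p (i+1) ≤ p y := hp.monotone (by omega)
      have h8 : ¬ p y ≤ p i := by linarith
      have e1 : (if y ≤ i + 1 then (1:ℝ) else Real.exp (b * (p (i+1) - p y)))
          = Real.exp (b * (p (i+1) - p y)) := by
        split_ifs with h9
        · have : y = i + 1 := by omega
          simp [this]
        · rfl
      have e2 : Real.exp (b * (p i - p y)) = w (i+1) * Real.exp (b * (p (i+1) - p y)) := by
        simp only [w, Nat.add_sub_cancel]; rw [← Real.exp_add]; ring_nf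
      have e3 : Bq b (p (i+1) - p y) = 1/(1+b) * Real.exp (b * (p (i+1) - p y)) := by
        by_cases h9 : p y ≤ p (i+1)
        · have : p y = p (i+1) := le_antisymm h9 h7
          simp [Bq, this]; field_simp; ring
        · simp [Bq, h9]
      rw [e3, e1]
      simp only [Bq, h, sub_nonneg, h8, if_false, e2]
      field_simp
      ring

open MeasureTheory in
theorem integrable_ite (u v : ℝ → ℝ) (hu : IntegrableOn u (Set.Ioi 0)) (hv : IntegrableOn v (Set.Iic 0)) :
    Integrable (fun x => if 0 ≤ x then u x else v x) := by
  have h1 : IntegrableOn u (Set.Ici 0) := (integrableOn_Ici_iff_integrableOn_Ioi (by finiteness)).2 hu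
  have h2 : IntegrableOn v (Set.Ici (0:ℝ))ᶜ := by
    rw [Set.compl_Ici]; exact hv.mono_set Set.Iio_subset_Iic_self
  exact Integrable.piecewise (s := Set.Ici (0:ℝ)) measurableSet_Ici h1 h2

open MeasureTheory in
theorem pf_exp (c : ℝ) (hc : 0 < c) :
    IsPolyaFrequencyFunction (fun x => if 0 ≤ x then c * Real.exp (-x) else 0) := by
  refine ⟨?_, ?_, ⟨0, 1, by norm_num, by simp [hc.ne'], by simp [hc.ne']⟩, ?_⟩
  · refine integrable_ite _ _ ?_ (by simp)
    exact (integrableOn_exp_neg_Ioi 0).const_mul c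
  · intro x; dsimp only; split_ifs <;> positivity
  · convert TN_scale _ TN_step (fun x => c * Real.exp (-x)) (fun y => Real.exp y)
      (fun x => by positivity) (fun x => by positivity) using 3 with x y
    by_cases h : y ≤ x
    · simp [h, neg_sub, sub_eq_add_neg, Real.exp_add]; ring
    · simp [h]

theorem TN_G' (b : ℝ) (hb : 0 < b) :
    IsTNKernel (fun x y : ℝ => if y ≤ x then (1:ℝ) else Real.exp (b * (x - y))) := by
  refine TN_of_grid _ fun p hp => ?_
  simpa [hp.le_iff_le] using TN_G b hb p hp

open MeasureTheory in
theorem pf_abs (c : ℝ) (hc : 0 < c) :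
    IsPolyaFrequencyFunction (fun x => c * Real.exp (-|x|)) := by
  refine ⟨?_, ?_, ⟨0, 1, by norm_num, by simp [hc.ne'], by simp [hc.ne']⟩, ?_⟩
  · have := integrable_ite (fun x => c * Real.exp (-x)) (fun x => c * Real.exp x)
      ((integrableOn_exp_neg_Ioi 0).const_mul c) ((integrableOn_exp_Iic 0).const_mul c)
    convert this using 2 with x
    split_ifs with h
    · rw [abs_of_nonneg h]
    · rw [abs_of_neg (by linarith)]; simp
  · intro x; positivity
  · convert TN_scale _ (TN_G' 2 (by norm_num)) (fun x => c * Real.exp (-x)) (fun y => Real.exp y)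
      (fun x => by positivity) (fun x => by positivity) using 3 with x y
    dsimp only
    by_cases h : y ≤ x
    · rw [abs_of_nonneg (by linarith)]
      simp [h, neg_sub, sub_eq_add_neg, Real.exp_add]; ring
    · rw [abs_of_neg (by linarith), if_neg h, mul_assoc, ← Real.exp_add, ← Real.exp_add]
      ring_nf

theorem Bq_pos (b : ℝ) (hb : 0 < b) (x : ℝ) : 0 < Bq b x := by
  unfold Bq
  split_ifs with h
  · have : b / (1+b) < 1 := by rw [div_lt_one (by linarith)]; linarith
    have h2 : Real.exp (-x) ≤ 1 := Real.exp_le_one_iff.2 (by linarith)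
    have h3 := Real.exp_pos (-x)
    have : 0 < b/(1+b) := by positivity
    nlinarith
  · positivity

open MeasureTheory in
theorem pf_B (b : ℝ) (hb : 0 < b) :
    IsPolyaFrequencyFunction (fun x => Real.exp (-(b/2) * x) * Bq b x) := by
  have hpos : ∀ x, 0 < Real.exp (-(b/2) * x) * Bq b x := fun x =>
    mul_pos (Real.exp_pos _) (Bq_pos b hb x)
  refine ⟨?_, fun x => (hpos x).le, ⟨0, 1, by norm_num, (hpos _).ne', (hpos _).ne'⟩, ?_⟩
  · have := integrable_ite (fun x => Real.exp (-(b/2) * x) - b/(1+b) * Real.exp ((-(b/2) - 1) * x))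
      (fun x => 1/(1+b) * Real.exp (b/2 * x))
      ((integrableOn_exp_mul_Ioi (by linarith) 0).sub
        ((integrableOn_exp_mul_Ioi (by linarith) 0).const_mul _))
      ((integrableOn_exp_mul_Iic (by linarith) 0).const_mul _)
    convert this using 2 with x
    unfold Bq
    split_ifs with h
    · rw [mul_sub, mul_left_comm, ← Real.exp_add]; ring_nf
    · rw [mul_left_comm, ← Real.exp_add]; ring_nf
  · convert TN_scale _ (TN_B b hb) (fun x => Real.exp (-(b/2)*x)) (fun y => Real.exp (b/2*y))
      (fun x => by positivity) (fun x => by positivity) using 3 with x y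
    rw [← mul_assoc, ← Real.exp_add]; ring_nf

/-- preserver hypothesis -/
def Pres (F : ℝ → ℝ) : Prop :=
  ∀ Λ : ℝ → ℝ, IsPolyaFrequencyFunction Λ → IsPolyaFrequencyFunction (F ∘ Λ)

open MeasureTheory in
theorem F_zero (F : ℝ → ℝ) (h : Pres F) : F 0 = 0 := by
  have h1 := (h _ (pf_exp 1 one_pos)).1.integrableOn (s := Set.Iio 0)
  have h2 : IntegrableOn (fun _ : ℝ => F 0) (Set.Iio 0) := by
    refine h1.congr_fun ?_ measurableSet_Iio
    intro x hx
    have : ¬ (0 ≤ x) := not_le.2 hx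
    simp [this]
  rw [integrableOn_const_iff] at h2
  simpa using h2

theorem F_mono (F : ℝ → ℝ) (hF : ∀ x : ℝ, 0 ≤ x → 0 ≤ F x) (h : Pres F) (x y : ℝ) (hx : 0 < x)
    (hxy : x ≤ y) : F x ≤ F y := by
  rcases hxy.eq_or_lt with e | hlt
  · rw [e]
  have hy : 0 < y := hx.trans hlt
  have h1 := (h _ (pf_abs y hy)).2.2.2
  have hlog : Real.log x < Real.log y := Real.log_lt_log hx hlt
  have h2 := h1 2 ![0, Real.log y - Real.log x] ![0, Real.log y - Real.log x]
    (by intro i j; fin_cases i <;> fin_cases j <;> simp [hlt, hx, hlog])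
    (by intro i j; fin_cases i <;> fin_cases j <;> simp [hlt, hx, hlog])
  have e1 : y * Real.exp (-|Real.log x - Real.log y|) = x := by
    rw [abs_of_neg (by linarith), neg_neg, Real.exp_sub, Real.exp_log hx, Real.exp_log hy]
    field_simp
  have e2 : y * Real.exp (-|Real.log y - Real.log x|) = x := by
    rw [abs_sub_comm]; exact e1
  rw [Matrix.det_fin_two] at h2
  simp [e1, e2] at h2
  exact (mul_self_le_mul_self_iff (hF x hx.le) (hF y hy.le)).2 h2

theorem F_pos (F : ℝ → ℝ) (hF : ∀ x : ℝ, 0 ≤ x → 0 ≤ F x) (h : Pres F) (x : ℝ) (hx : 0 < x) :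
    0 < F x := by
  obtain ⟨a, b, -, ha, -⟩ := (h _ (pf_exp x hx)).2.2.1
  by_cases h0 : 0 ≤ a
  · simp only [Function.comp, h0, if_true] at ha
    have h1 : 0 < x * Real.exp (-a) := by positivity
    have h2 : x * Real.exp (-a) ≤ x := by
      have : Real.exp (-a) ≤ 1 := Real.exp_le_one_iff.2 (by linarith)
      nlinarith
    have := F_mono F hF h _ x h1 h2
    have := hF _ h1.le
    exact lt_of_lt_of_le (lt_of_le_of_ne this (Ne.symm ha)) (F_mono F hF h _ x h1 h2)
  · simp [h0, F_zero F h] at ha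

theorem G_TN (F : ℝ → ℝ) (h : Pres F) (t : ℝ) :
    IsTNKernel (fun x y : ℝ => if y ≤ x then F (Real.exp (-(t + (x - y)))) else 0) := by
  have h1 := (h _ (pf_exp (Real.exp (-t)) (Real.exp_pos _))).2.2.2
  convert h1 using 3 with x y
  by_cases hh : y ≤ x
  · simp [hh, ← Real.exp_add]; ring_nf
  · simp [hh, F_zero F h]

/-- 2x2 minors -/
theorem G_two (F : ℝ → ℝ) (h : Pres F) (t s v : ℝ) (hs : 0 < s) (hv : 0 < v) :
    F (Real.exp (-t)) * F (Real.exp (-(t+s+v))) ≤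
      F (Real.exp (-(t+s))) * F (Real.exp (-(t+v))) := by
  have h2 := G_TN F h t 2 ![0, v] ![-s, 0]
    (by intro i j; fin_cases i <;> fin_cases j <;> simp [hs, hv])
    (by intro i j; fin_cases i <;> fin_cases j <;> simp [hs, hv])
  rw [Matrix.det_fin_two] at h2
  have e1 : -s ≤ v := by linarith
  simp [hs.le, hv.le, e1] at h2
  ring_nf at h2 ⊢
  linarith

theorem G_three (F : ℝ → ℝ) (h : Pres F) (t s u v : ℝ) (hs : 0 < s) (hu : 0 < u) (hv : 0 < v) :
    0 ≤ F (Real.exp (-(t+s))) * (F (Real.exp (-(t+u))) * F (Real.exp (-(t+v)))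
        - F (Real.exp (-t)) * F (Real.exp (-(t+u+v))))
      - F (Real.exp (-t)) * (F (Real.exp (-(t+u+s))) * F (Real.exp (-(t+v)))
        - F (Real.exp (-t)) * F (Real.exp (-(t+u+v+s)))) := by
  have h2 := G_TN F h t 3 ![0, u, u+v] ![-s, 0, u]
    (by intro i j; fin_cases i <;> fin_cases j <;> simp [hs, hv, hu]; linarith)
    (by intro i j; fin_cases i <;> fin_cases j <;> simp [hs, hv, hu]; linarith)
  rw [Matrix.det_fin_three] at h2
  have e1 : -s ≤ u := by linarith
  have e2 : -s ≤ u + v := by linarith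
  have e3 : 0 ≤ u + v := by linarith
  have e4 : ¬ u ≤ 0 := by linarith
  simp [hs.le, hv.le, hu.le, e1, e2, e3, e4] at h2
  ring_nf at h2 ⊢
  linarith

open Filter Topology in
theorem G_rightcont (F : ℝ → ℝ) (hF : ∀ x : ℝ, 0 ≤ x → 0 ≤ F x) (h : Pres F) (t : ℝ) :
    Tendsto (fun u => F (Real.exp (-(t+u)))) (𝓝[>] 0) (𝓝 (F (Real.exp (-t)))) := by
  set G : ℝ → ℝ := fun t => F (Real.exp (-t)) with hG
  have Gpos : ∀ t, 0 < G t := fun t => F_pos F hF h _ (Real.exp_pos _)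
  have Ganti : ∀ a b, a ≤ b → G b ≤ G a := fun a b hab =>
    F_mono F hF h _ _ (Real.exp_pos _) (by gcongr)
  change Tendsto (fun u => G (t+u)) (𝓝[>] 0) (𝓝 (G t))
  have key : ∀ ρ, 0 < ρ → ρ < 1 → ∃ d > 0, ρ * G t ≤ G (t + d) := by
    intro ρ h0 h1
    by_contra hcon
    push Not at hcon
    have step : ∀ c d, 0 ≤ c → 0 < d → G (t + c + d) ≤ ρ * G (t + c) := by
      intro c d hc hd
      rcases hc.eq_or_lt with e | hc
      · subst e; simpa using (hcon d hd).le
      · have h2 : G t * G (t + c + d) ≤ G (t + c) * G (t + d) := G_two F h t c d hc hd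
        have h3 := hcon d hd
        have h4 := Gpos t
        have h5 := Gpos (t+c)
        by_contra h6
        push Not at h6
        nlinarith
    have it : ∀ n : ℕ, ∀ d, 0 < d → G (t + n * d) ≤ ρ ^ n * G t := by
      intro n d hd
      induction n with
      | zero => simp
      | succ n ih =>
        have := step (n * d) d (by positivity) hd
        have e : t + ((n+1 : ℕ) : ℝ) * d = t + n * d + d := by push_cast; ring
        rw [e, pow_succ]
        nlinarith
    have lim : Tendsto (fun n : ℕ => ρ ^ n * G t) atTop (𝓝 (0 * G t)) :=
      (tendsto_pow_atTop_nhds_zero_of_lt_one h0.le h1).mul_const _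
    have : G (t + 1) ≤ 0 * G t := by
      refine ge_of_tendsto lim ?_
      filter_upwards [eventually_gt_atTop 0] with n hn
      have h2 : (0:ℝ) < n := by exact_mod_cast hn
      have := it n (1/n) (by positivity)
      rwa [mul_one_div_cancel h2.ne'] at this
    have := Gpos (t+1)
    linarith
  rw [tendsto_order]
  constructor
  · intro a ha
    obtain ⟨ρ, h0, h1, h2⟩ : ∃ ρ, 0 < ρ ∧ ρ < 1 ∧ a < ρ * G t := by
      have hg := Gpos t
      obtain ⟨m, hm1, hm2⟩ := exists_between (max_lt ha hg)
      refine ⟨m / G t, div_pos (lt_of_le_of_lt (le_max_right _ _) hm1) hg, (div_lt_one hg).2 hm2, ?_⟩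
      rw [div_mul_cancel₀ _ hg.ne']
      exact lt_of_le_of_lt (le_max_left _ _) hm1
    obtain ⟨d, hd, hd2⟩ := key ρ h0 h1
    filter_upwards [Ioo_mem_nhdsGT hd] with u hu
    have := Ganti (t+u) (t+d) (by linarith [hu.2])
    linarith
  · intro a ha
    filter_upwards [self_mem_nhdsWithin] with u hu
    have hu : 0 < u := hu
    have := Ganti t (t+u) (by linarith)
    linarith

open Filter Topology in
theorem G_mul (F : ℝ → ℝ) (hF : ∀ x : ℝ, 0 ≤ x → 0 ≤ F x) (h : Pres F) (t s v : ℝ)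
    (hs : 0 < s) (hv : 0 < v) :
    F (Real.exp (-t)) * F (Real.exp (-(t+s+v))) =
      F (Real.exp (-(t+s))) * F (Real.exp (-(t+v))) := by
  refine le_antisymm (G_two F h t s v hs hv) ?_
  set G : ℝ → ℝ := fun t => F (Real.exp (-t)) with hG
  have Gpos : ∀ t, 0 < G t := fun t => F_pos F hF h _ (Real.exp_pos _)
  have Ganti : ∀ a b, a ≤ b → G b ≤ G a := fun a b hab =>
    F_mono F hF h _ _ (Real.exp_pos _) (by gcongr)
  change G (t+s) * G (t+v) ≤ G t * G (t+s+v)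
  have lim : Tendsto (fun u => G (t+s) * G (t+u) - G t * G (t+s+u)) (𝓝[>] 0)
      (𝓝 (G (t+s) * G t - G t * G (t+s))) :=
    ((G_rightcont F hF h t).const_mul _).sub ((G_rightcont F hF h (t+s)).const_mul _)
  have : G (t+s) * G (t+v) - G t * G (t+s+v) ≤ G (t+s) * G t - G t * G (t+s) := by
    refine ge_of_tendsto lim ?_
    filter_upwards [Ioo_mem_nhdsGT hv] with u hu
    have h3 := G_three F h t s u (v-u) hs hu.1 (by linarith [hu.2])
    have e1 : t + u + (v - u) = t + v := by ring
    have e2 : t + u + (v - u) + s = t + s + v := by ring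
    have e3 : t + u + s = t + s + u := by ring
    rw [e2, e1, e3] at h3
    change 0 ≤ G (t+s) * (G (t+u) * G (t+(v-u)) - G t * G (t+v))
      - G t * (G (t+s+u) * G (t+(v-u)) - G t * G (t+s+v)) at h3
    have h4 : G t * G (t + s + u) ≤ G (t + s) * G (t + u) := G_two F h t s u hs hu.1
    have h5 := Ganti t (t+(v-u)) (by linarith [hu.2])
    have h6 := Gpos t
    have h7 : G t * (G (t+s) * G (t+v) - G t * G (t+s+v)) ≤
       G t * (G (t+s) * G (t+u) - G t * G (t+s+u)) := by nlinarith
    exact le_of_mul_le_mul_left h7 h6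
  linarith

open MeasureTheory in
theorem F_power (F : ℝ → ℝ) (hF : ∀ x : ℝ, 0 ≤ x → 0 ≤ F x) (h : Pres F) :
    ∃ C α : ℝ, 0 < C ∧ 0 < α ∧ ∀ x, 0 < x → F x = C * x ^ α := by
  set G : ℝ → ℝ := fun t => F (Real.exp (-t)) with hG
  have Gpos : ∀ t, 0 < G t := fun t => F_pos F hF h _ (Real.exp_pos _)
  have Ganti : ∀ a b, a ≤ b → G b ≤ G a := fun a b hab =>
    F_mono F hF h _ _ (Real.exp_pos _) (by gcongr)
  let L : ℝ → ℝ := fun t => Real.log (G t)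
  have Lanti : Antitone L := fun a b hab => Real.log_le_log (Gpos b) (Ganti a b hab)
  have hL : ∀ t s v, 0 < s → 0 < v → L t + L (t+s+v) = L (t+s) + L (t+v) := by
    intro t s v hs hv
    have : G t * G (t+s+v) = G (t+s) * G (t+v) := G_mul F hF h t s v hs hv
    simp only [L]
    rw [← Real.log_mul (Gpos _).ne' (Gpos _).ne', ← Real.log_mul (Gpos _).ne' (Gpos _).ne', this]
  have hadd : ∀ x y, L (x+y) + L 0 = L x + L y := by
    have mixed : ∀ x y, x < 0 → 0 < y → L (x+y) + L 0 = L x + L y := by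
      intro x y hx hy
      have := hL x (-x) y (by linarith) hy
      simp at this
      linarith
    intro x y
    rcases lt_trichotomy x 0 with hx | hx | hx
    · rcases lt_trichotomy y 0 with hy | hy | hy
      · have := hL (x+y) (-x) (-y) (by linarith) (by linarith)
        have e1 : x + y + -x + -y = 0 := by ring
        have e2 : x + y + -x = y := by ring
        have e3 : x + y + -y = x := by ring
        rw [e1, e2, e3] at this; linarith
      · simp [hy]
      · exact mixed x y hx hy
    · simp [hx]; ring
    · rcases lt_trichotomy y 0 with hy | hy | hy
      · have := mixed y x hy hx
        rw [add_comm y x] at this; linarith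
      · simp [hy]
      · have := hL 0 x y hx hy
        simp at this; linarith
  let f : ℝ →+ ℝ := AddMonoidHom.mk' (fun t => L t - L 0) (fun a b => by
    have := hadd a b; linarith)
  have hf : Continuous f := by
    apply MeasureTheory.Measure.AddMonoidHom.continuous_of_measurable
    exact (Lanti.measurable).sub_const _
  have hlin : ∀ t, L t = L 0 - (-(f 1)) * t := by
    intro t
    have := map_real_smul f hf t 1
    simp only [smul_eq_mul, mul_one] at this
    have e : f t = L t - L 0 := rfl
    linarith
  have hFx : ∀ x, 0 < x → F x = G 0 * x ^ (-(f 1)) := by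
    intro x hx
    have h1 := hlin (-Real.log x)
    have h2 : G (-Real.log x) = F x := by simp [hG, Real.exp_log hx]
    rw [← h2, ← Real.exp_log (Gpos (-Real.log x)), Real.rpow_def_of_pos hx]
    change Real.exp (L (-Real.log x)) = _
    rw [h1]
    have e0 : G 0 = Real.exp (L 0) := (Real.exp_log (Gpos 0)).symm
    rw [e0, ← Real.exp_add]
    congr 1
    ring
  have hα : 0 ≤ -(f 1) := by
    have := Lanti (zero_le_one)
    have e : f 1 = L 1 - L 0 := rfl
    linarith
  refine ⟨G 0, -(f 1), Gpos 0, lt_of_le_of_ne hα ?_, hFx⟩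
  intro h0
  rw [← h0] at hFx
  have h1 := (h _ (pf_exp 1 one_pos)).1.integrableOn (s := Set.Ioi 0)
  have h2 : IntegrableOn (fun _ : ℝ => G 0) (Set.Ioi 0) := by
    refine h1.congr_fun ?_ measurableSet_Ioi
    intro x hx
    have : 0 ≤ x := le_of_lt hx
    simp [this]
    rw [hFx _ (Real.exp_pos _)]; simp
  rw [integrableOn_const_iff] at h2
  have := Gpos 0
  simp [this.ne'] at h2

open Filter Topology in
theorem rho_lim (α : ℝ) :
    Tendsto (fun s : ℝ => ((1 - s) ^ α - 1 + α * s) / s ^ 2) (𝓝[>] 0) (𝓝 (α * (α - 1) / 2)) := by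
  have hd : ∀ β s : ℝ, s < 1 → HasDerivAt (fun s : ℝ => (1 - s) ^ β) (-(β * (1 - s) ^ (β - 1))) s := by
    intro β s hs
    have h1 : HasDerivAt (fun s : ℝ => 1 - s) (-1) s := by
      simpa using (hasDerivAt_id s).const_sub 1
    have := h1.rpow_const (p := β) (Or.inl (by linarith : (1 - s) ≠ 0))
    convert this using 1; ring
  have hlt : ∀ᶠ s : ℝ in 𝓝[>] 0, s ∈ Set.Ioo (0:ℝ) 1 := Ioo_mem_nhdsGT one_pos
  refine HasDerivAt.lhopital_zero_nhdsGT (f' := fun s => -(α * (1 - s) ^ (α - 1)) + α)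
    (g' := fun s => 2 * s) ?_ ?_ ?_ ?_ ?_ ?_
  · filter_upwards [hlt] with s hs
    have := ((hd α s hs.2).sub_const 1).add ((hasDerivAt_id s).const_mul α)
    simp only [mul_one] at this
    exact this
  · filter_upwards with s
    simpa using hasDerivAt_pow 2 s
  · filter_upwards [hlt] with s hs
    have := hs.1
    positivity
  · have : ContinuousAt (fun s : ℝ => (1 - s) ^ α - 1 + α * s) 0 :=
      (((hd α 0 one_pos).sub_const 1).add ((hasDerivAt_id (0:ℝ)).const_mul α)).continuousAt
    have := this.tendsto.mono_left (nhdsWithin_le_nhds (s := Set.Ioi 0))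
    simpa using this
  · have : ContinuousAt (fun s : ℝ => s ^ 2) 0 := by fun_prop
    have := this.tendsto.mono_left (nhdsWithin_le_nhds (s := Set.Ioi 0))
    simpa using this
  · have h1 := (hasDerivAt_iff_tendsto_slope.1 (hd (α-1) 0 one_pos)).mono_left
      (nhdsWithin_mono 0 (fun x (hx : 0 < x) => ne_of_gt hx) : 𝓝[>] (0:ℝ) ≤ _)
    have h2 := h1.const_mul (-α/2)
    refine (h2.congr' ?_).trans_eq ?_
    · filter_upwards [hlt] with s hs
      have := hs.1.ne'
      simp [slope_def_field]
      field_simp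
      ring
    · congr 1; simp; ring

/-- 3x3 determinant -/
def D3 (a b c d e f g h i : ℝ) : ℝ :=
  a * e * i - a * f * h - b * d * i + b * f * g + c * d * h - c * e * g

/-- 4x4 determinant -/
def D4 (a b c d e f g h i j k l m n o p : ℝ) : ℝ :=
  a * D3 f g h j k l n o p - b * D3 e g h i k l m o p + c * D3 e f h i j l m n p
    - d * D3 e f g i j k m n o

/-- reduced 3x3 minor -/
noncomputable def P3 (α : ℝ) (z : ℝ × (Fin 7 → ℝ)) : ℝ :=
  (1/2) * D3 (1 - α * z.1 * (1/8) + z.1 ^ 2 * z.2 4) (1 - α * z.1 * (1/4) + z.1 ^ 2 * z.2 3)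
    (1 - α * z.1 * (1/2) + z.1 ^ 2 * z.2 2)
    (α * (1/16) + z.1 * (z.2 5 - z.2 4)) (α * (1/8) + z.1 * (z.2 4 - z.2 3))
    (α * (1/4) + z.1 * (z.2 3 - z.2 2))
    (z.2 4 - 3 * z.2 5 + 2 * z.2 6) (z.2 3 - 3 * z.2 4 + 2 * z.2 5) (z.2 2 - 3 * z.2 3 + 2 * z.2 4)

/-- reduced 4x4 minor -/
noncomputable def P4 (α : ℝ) (z : ℝ × (Fin 7 → ℝ)) : ℝ :=
  (1/4) * D4
    (1 - α * z.1 * (1/4) + z.1 ^ 2 * z.2 3) (1 - α * z.1 * (1/2) + z.1 ^ 2 * z.2 2)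
    (1 - α * z.1 * 1 + z.1 ^ 2 * z.2 1) (1 - α * z.1 * 2 + z.1 ^ 2 * z.2 0)
    (α * (1/8) + z.1 * (z.2 4 - z.2 3)) (α * (1/4) + z.1 * (z.2 3 - z.2 2))
    (α * (1/2) + z.1 * (z.2 2 - z.2 1)) (α * 1 + z.1 * (z.2 1 - z.2 0))
    (z.2 3 - 3 * z.2 4 + 2 * z.2 5) (z.2 2 - 3 * z.2 3 + 2 * z.2 4) 
    (z.2 1 - 3 * z.2 2 + 2 * z.2 3) (z.2 0 - 3 * z.2 1 + 2 * z.2 2)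
    (z.2 4 - 3 * z.2 5 + 2 * z.2 6) (z.2 3 - 3 * z.2 4 + 2 * z.2 5) 
    (z.2 2 - 3 * z.2 3 + 2 * z.2 4) (z.2 1 - 3 * z.2 2 + 2 * z.2 3)

theorem P3_cont (α : ℝ) : Continuous (P3 α) := by
  unfold P3 D3; fun_prop

theorem P4_cont (α : ℝ) : Continuous (P4 α) := by
  unfold P4 D4 D3; fun_prop

theorem P3_eq (α q : ℝ) (r : Fin 7 → ℝ) (e2 e3 e4 e5 e6 : ℝ)
    (h2 : e2 = 1 - α * q * (1/2) + q ^ 2 * r 2)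
    (h3 : e3 = 1 - α * q * (1/4) + q ^ 2 * r 3) (h4 : e4 = 1 - α * q * (1/8) + q ^ 2 * r 4)
    (h5 : e5 = 1 - α * q * (1/16) + q ^ 2 * r 5) (h6 : e6 = 1 - α * q * (1/32) + q ^ 2 * r 6) :
    D3 e4 e3 e2 e5 e4 e3 e6 e5 e4 = q ^ 3 * P3 α (q, r) := by
  subst h2 h3 h4 h5 h6
  simp only [P3, D3]
  generalize r 2 = r2, r 3 = r3, r 4 = r4, r 5 = r5, r 6 = r6
  ring

theorem D4_rows (a b c d e f g h i j k l m n o p q : ℝ) :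
    4 * D4 a b c d (a + q * e) (b + q * f) (c + q * g) (d + q * h)
      ((q^2 * i - a + 3 * (a + q * e)) / 2) ((q^2 * j - b + 3 * (b + q * f)) / 2)
      ((q^2 * k - c + 3 * (c + q * g)) / 2) ((q^2 * l - d + 3 * (d + q * h)) / 2)
      ((q^2 * m - (a + q * e) + 3 * ((q^2 * i - a + 3 * (a + q * e)) / 2)) / 2)
      ((q^2 * n - (b + q * f) + 3 * ((q^2 * j - b + 3 * (b + q * f)) / 2)) / 2)
      ((q^2 * o - (c + q * g) + 3 * ((q^2 * k - c + 3 * (c + q * g)) / 2)) / 2)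
      ((q^2 * p - (d + q * h) + 3 * ((q^2 * l - d + 3 * (d + q * h)) / 2)) / 2)
    = q ^ 5 * D4 a b c d e f g h i j k l m n o p := by
  simp only [D4, D3]; ring

theorem P4_eq (α q : ℝ) (r : Fin 7 → ℝ) (e0 e1 e2 e3 e4 e5 e6 : ℝ)
    (h0 : e0 = 1 - α * q * 2 + q ^ 2 * r 0) (h1 : e1 = 1 - α * q * 1 + q ^ 2 * r 1)
    (h2 : e2 = 1 - α * q * (1/2) + q ^ 2 * r 2)
    (h3 : e3 = 1 - α * q * (1/4) + q ^ 2 * r 3) (h4 : e4 = 1 - α * q * (1/8) + q ^ 2 * r 4)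
    (h5 : e5 = 1 - α * q * (1/16) + q ^ 2 * r 5) (h6 : e6 = 1 - α * q * (1/32) + q ^ 2 * r 6) :
    D4 e3 e2 e1 e0 e4 e3 e2 e1 e5 e4 e3 e2 e6 e5 e4 e3 = q ^ 5 * P4 α (q, r) := by
  have := D4_rows e3 e2 e1 e0
    (α * (1/8) + q * (r 4 - r 3)) (α * (1/4) + q * (r 3 - r 2))
    (α * (1/2) + q * (r 2 - r 1)) (α * 1 + q * (r 1 - r 0))
    (r 3 - 3 * r 4 + 2 * r 5) (r 2 - 3 * r 3 + 2 * r 4) 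
    (r 1 - 3 * r 2 + 2 * r 3) (r 0 - 3 * r 1 + 2 * r 2)
    (r 4 - 3 * r 5 + 2 * r 6) (r 3 - 3 * r 4 + 2 * r 5) 
    (r 2 - 3 * r 3 + 2 * r 4) (r 1 - 3 * r 2 + 2 * r 3) q
  simp only [P4]
  rw [← h0, ← h1, ← h2, ← h3]
  have k3 : e3 + q * (α * (1/8) + q * (r 4 - r 3)) = e4 := by rw [h3, h4]; ring
  have k2 : e2 + q * (α * (1/4) + q * (r 3 - r 2)) = e3 := by rw [h2, h3]; ring
  have k1 : e1 + q * (α * (1/2) + q * (r 2 - r 1)) = e2 := by rw [h2, h1]; ring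
  have k0 : e0 + q * (α * 1 + q * (r 1 - r 0)) = e1 := by rw [h1, h0]; ring
  rw [k3, k2, k1, k0] at this
  have l0 : (q^2 * (r 0 - 3 * r 1 + 2 * r 2) - e0 + 3 * e1) / 2 = e2 := by rw [h0, h1, h2]; ring
  have l1 : (q^2 * (r 1 - 3 * r 2 + 2 * r 3) - e1 + 3 * e2) / 2 = e3 := by rw [h3, h1, h2]; ring
  have l2 : (q^2 * (r 2 - 3 * r 3 + 2 * r 4) - e2 + 3 * e3) / 2 = e4 := by rw [h3, h4, h2]; ring
  have l3 : (q^2 * (r 3 - 3 * r 4 + 2 * r 5) - e3 + 3 * e4) / 2 = e5 := by rw [h3, h4, h5]; ring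
  have l4 : (q^2 * (r 4 - 3 * r 5 + 2 * r 6) - e4 + 3 * e5) / 2 = e6 := by rw [h6, h4, h5]; ring
  rw [l0, l1, l2, l3, l4] at this
  linarith

theorem D4_corner (a b c d e f g h i j k l m n o p J : ℝ) :
    D4 a b c (d + J) e f g h i j k l m n o p = D4 a b c d e f g h i j k l m n o p
      - J * D3 e f g i j k m n o := by
  simp only [D4]; ring

/-- Toeplitz 4x4 and 3x3 minors on an arithmetic progression. -/
theorem toeplitz_minors (f : ℝ → ℝ) (δ : ℝ) (hδ : 0 < δ)
    (h : IsTNKernel (fun x y : ℝ => f (x - y))) :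
    0 ≤ D3 (f (3*δ)) (f (2*δ)) (f δ) (f (4*δ)) (f (3*δ)) (f (2*δ)) (f (5*δ)) (f (4*δ)) (f (3*δ)) ∧
    0 ≤ D4 (f (2*δ)) (f δ) (f 0) (f (-δ)) (f (3*δ)) (f (2*δ)) (f δ) (f 0)
      (f (4*δ)) (f (3*δ)) (f (2*δ)) (f δ) (f (5*δ)) (f (4*δ)) (f (3*δ)) (f (2*δ)) := by
  constructor
  · have := h 3 (fun i => (i:ℝ) * δ) (fun i => (i:ℝ) * δ - 3 * δ)
      (fun i j hij => by
        have : (i:ℝ) < j := by exact_mod_cast hij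
        dsimp only; nlinarith)
      (fun i j hij => by
        have : (i:ℝ) < j := by exact_mod_cast hij
        dsimp only; nlinarith)
    rw [Matrix.det_fin_three] at this
    simp at this
    simp only [D3]
    ring_nf at this ⊢
    linarith
  · have := h 4 (fun i => (i:ℝ) * δ) (fun i => (i:ℝ) * δ - 2 * δ)
      (fun i j hij => by
        have : (i:ℝ) < j := by exact_mod_cast hij
        dsimp only; nlinarith)
      (fun i j hij => by
        have : (i:ℝ) < j := by exact_mod_cast hij
        dsimp only; nlinarith)
    rw [Matrix.det_succ_row_zero] at this
    simp [Fin.sum_univ_succ, Matrix.det_fin_three, Fin.succAbove] at this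
    simp only [D4, D3]
    ring_nf at this ⊢
    linarith

theorem pow_TN (F : ℝ → ℝ) (h : Pres F) (C α : ℝ) (hC : 0 < C)
    (hFx : ∀ x, 0 < x → F x = C * x ^ α) (b : ℝ) (hb : 0 < b) :
    IsTNKernel (fun x y : ℝ => (Bq b (x - y)) ^ α) := by
  have h1 := (h _ (pf_B b hb)).2.2.2
  convert TN_scale _ h1 (fun x => C⁻¹ * Real.exp (α * (b/2) * x)) (fun y => Real.exp (-(α * (b/2) * y)))
      (fun x => by positivity) (fun x => by positivity) using 3 with x y
  have hB := Bq_pos b hb (x - y)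
  simp only [Function.comp]
  rw [hFx _ (mul_pos (Real.exp_pos _) hB), Real.mul_rpow (Real.exp_pos _).le hB.le, ← Real.exp_mul]
  have e : Real.exp (α * (b/2) * x) * Real.exp (-(α * (b/2) * y)) *
     Real.exp (-(b/2) * (x-y) * α) = 1 := by
    rw [← Real.exp_add, ← Real.exp_add, Real.exp_eq_one_iff]; ring
  calc Bq b (x-y) ^ α = (Real.exp (α * (b/2) * x) * Real.exp (-(α * (b/2) * y)) *
     Real.exp (-(b/2) * (x-y) * α)) * Bq b (x-y) ^ α * (C⁻¹ * C) := by
        rw [e, inv_mul_cancel₀ hC.ne']; ring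
    _ = _ := by ring

/-- corner difference -/
noncomputable def Jc (α q : ℝ) : ℝ :=
  ((1 - q) * Real.exp (-(q / (1 - q) * Real.log 2))) ^ α - (1 - 2 * q) ^ α

open Filter Topology in
theorem Jc_lim (α : ℝ) : Tendsto (fun q => Jc α q / q) (𝓝[>] 0) (𝓝 (α * (1 - Real.log 2))) := by
  have h1 : HasDerivAt (fun q : ℝ => 1 - q) (-1) 0 := by
    simpa using (hasDerivAt_id (0:ℝ)).const_sub 1
  have h2 : HasDerivAt (fun q : ℝ => 1 - 2 * q) (-2) 0 := by
    simpa using ((hasDerivAt_id (0:ℝ)).const_mul 2).const_sub 1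
  have h3 : HasDerivAt (fun q : ℝ => q / (1 - q)) 1 0 := by
    have := (hasDerivAt_id (0:ℝ)).div h1 (by norm_num)
    exact this.congr_deriv (by simp)
  have h4 : HasDerivAt (fun q : ℝ => Real.exp (-(q / (1 - q) * Real.log 2))) (-Real.log 2) 0 := by
    have := ((h3.mul_const (Real.log 2)).neg).exp
    simpa using this
  have h5 : HasDerivAt (fun q : ℝ => (1 - q) * Real.exp (-(q / (1 - q) * Real.log 2)))
      (-1 - Real.log 2) 0 := by
    have := h1.mul h4
    exact this.congr_deriv (by simp; try ring)
  have h6 : HasDerivAt (Jc α) (α * (1 - Real.log 2)) 0 := by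
    have a := h5.rpow_const (p := α) (Or.inl (by simp))
    have b := h2.rpow_const (p := α) (Or.inl (by simp))
    have c := a.sub b
    simp at c
    refine c.congr_deriv ?_
    ring
  have h7 := (hasDerivAt_iff_tendsto_slope.1 h6).mono_left
      (nhdsWithin_mono 0 (fun x (hx : 0 < x) => ne_of_gt hx) : 𝓝[>] (0:ℝ) ≤ _)
  refine h7.congr fun q => ?_
  simp [slope_def_field, Jc]

open Filter Topology in
theorem alpha_one (F : ℝ → ℝ) (h : Pres F) (C α : ℝ) (hC : 0 < C) (hα : 0 < α)
    (hFx : ∀ x, 0 < x → F x = C * x ^ α) : α = 1 := by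
  let T : Fin 7 → ℝ := ![2, 1, 1/2, 1/4, 1/8, 1/16, 1/32]
  have hT : ∀ k, 0 < T k := by intro k; fin_cases k <;> simp [T]
  let ρ : ℝ → ℝ := fun s => ((1 - s) ^ α - 1 + α * s) / s ^ 2
  let r : ℝ → Fin 7 → ℝ := fun q k => T k ^ 2 * ρ (q * T k)
  have hr : ∀ q, 0 < q → ∀ k, (1 - q * T k) ^ α = 1 - α * q * T k + q ^ 2 * r q k := by
    intro q hq k
    have := (mul_pos hq (hT k)).ne'
    have h1 := hq.ne'
    have h2 := (hT k).ne'
    simp only [r, ρ]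
    field_simp
    ring
  have rlim : Tendsto r (𝓝[>] 0) (𝓝 (fun k => T k ^ 2 * (α * (α - 1) / 2))) := by
    rw [tendsto_pi_nhds]
    intro k
    refine Tendsto.const_mul _ ((rho_lim α).comp ?_)
    refine tendsto_nhdsWithin_iff.2 ⟨?_, ?_⟩
    · have : ContinuousAt (fun q : ℝ => q * T k) 0 := by fun_prop
      have := this.tendsto.mono_left (nhdsWithin_le_nhds (s := Set.Ioi 0))
      simpa using this
    · filter_upwards [self_mem_nhdsWithin] with q hq
      exact mul_pos hq (hT k)
  have qlim : Tendsto (fun q : ℝ => q) (𝓝[>] 0) (𝓝 0) := nhdsWithin_le_nhds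
  have zlim := qlim.prodMk_nhds rlim
  have l3 := ((P3_cont α).tendsto _).comp zlim
  have l4 := ((P4_cont α).tendsto _).comp zlim
  have ev : ∀ᶠ q : ℝ in 𝓝[>] 0, 0 ≤ P3 α (q, r q) ∧
      0 ≤ q * P4 α (q, r q) - Jc α q / q * P3 α (q, r q) := by
    filter_upwards [Ioo_mem_nhdsGT (show (0:ℝ) < 1/2 by norm_num)] with q hq
    obtain ⟨hq0, hq1⟩ := hq
    have hb : 0 < q / (1 - q) := div_pos hq0 (by linarith)
    have hl2 : 0 < Real.log 2 := Real.log_pos (by norm_num)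
    obtain ⟨m3, m4⟩ := toeplitz_minors (fun x => Bq (q / (1-q)) x ^ α) (Real.log 2) hl2
      (pow_TN F h C α hC hFx _ hb)
    have hq2 : 1 - q ≠ 0 := by linarith
    have eb1 : q / (1 - q) / (1 + q / (1 - q)) = q := by field_simp; ring
    have eb2 : 1 / (1 + q / (1 - q)) = 1 - q := by field_simp; ring
    have ent : ∀ n : ℕ, Bq (q/(1-q)) (n * Real.log 2) = 1 - q * (1/2) ^ n := by
      intro n
      have : 0 ≤ (n:ℝ) * Real.log 2 := by positivity
      rw [Bq, if_pos this, eb1, ← mul_neg, Real.exp_nat_mul, Real.exp_neg, Real.exp_log (by norm_num)]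
      norm_num
    have v0 : Bq (q/(1-q)) 0 = 1 - q * T 1 := by simpa [T] using ent 0
    have v1 : Bq (q/(1-q)) (Real.log 2) = 1 - q * T 2 := by simpa [T] using ent 1
    have v2 : Bq (q/(1-q)) (2 * Real.log 2) = 1 - q * T 3 := by
      have := ent 2; norm_num at this; simp [T, this]
    have v3 : Bq (q/(1-q)) (3 * Real.log 2) = 1 - q * T 4 := by
      have := ent 3; norm_num at this; simp [T, this]
    have v4 : Bq (q/(1-q)) (4 * Real.log 2) = 1 - q * T 5 := by
      have := ent 4; norm_num at this; simp [T, this]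
    have v5 : Bq (q/(1-q)) (5 * Real.log 2) = 1 - q * T 6 := by
      have := ent 5; norm_num at this; simp [T, this]
    have vm : Bq (q/(1-q)) (-Real.log 2) ^ α = (1 - q * T 0) ^ α + Jc α q := by
      have : ¬ (0 ≤ -Real.log 2) := by linarith
      rw [Bq, if_neg this, eb2, Jc, mul_neg]
      have e : q * T 0 = 2 * q := by simp [T]; ring
      rw [e]; ring
    simp only [v0, v1, v2, v3, v4, v5, vm] at m3 m4
    rw [D4_corner] at m4
    have p3 := P3_eq α q (r q) _ _ _ _ _ (hr q hq0 2) (hr q hq0 3) (hr q hq0 4) (hr q hq0 5) (hr q hq0 6)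
    have p4 := P4_eq α q (r q) _ _ _ _ _ _ _ (hr q hq0 0) (hr q hq0 1) (hr q hq0 2) (hr q hq0 3)
      (hr q hq0 4) (hr q hq0 5) (hr q hq0 6)
    rw [p4, p3] at m4
    rw [p3] at m3
    refine ⟨nonneg_of_mul_nonneg_right m3 (by positivity), ?_⟩
    have e : q ^ 5 * P4 α (q, r q) - Jc α q * (q ^ 3 * P3 α (q, r q))
      = q ^ 4 * (q * P4 α (q, r q) - Jc α q / q * P3 α (q, r q)) := by
      field_simp
    rw [e] at m4
    exact nonneg_of_mul_nonneg_right m4 (by positivity)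
  have f3 := ge_of_tendsto l3 (ev.mono fun q hq => hq.1)
  have f4 := ge_of_tendsto ((qlim.mul l4).sub ((Jc_lim α).mul l3)) (ev.mono fun q hq => hq.2)
  have val : P3 α (0, fun k => T k ^ 2 * (α * (α - 1) / 2)) = 9/16384 * α ^ 2 * (α - 1) := by
    simp [P3, D3, T]
    ring
  rw [val] at f3 f4
  have hl : Real.log 2 < 1 := by linarith [Real.log_two_lt_d9]
  simp only [zero_mul, zero_sub] at f4
  have hj : 0 < α * (1 - Real.log 2) := mul_pos hα (by linarith)
  have z : 9/16384 * α ^ 2 * (α - 1) = 0 := by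
    refine le_antisymm ?_ f3
    by_contra hc
    push Not at hc
    have := mul_pos hj hc
    linarith
  have : 9/16384 * α ^ 2 ≠ 0 := by positivity
  rcases mul_eq_zero.1 z with h1 | h1
  · exact absurd h1 this
  · linarith

theorem stmt_14 (F : ℝ → ℝ) (hF : ∀ x : ℝ, 0 ≤ x → 0 ≤ F x) :
    (∀ Λ : ℝ → ℝ, IsPolyaFrequencyFunction Λ →
        IsPolyaFrequencyFunction (F ∘ Λ)) ↔
      ∃ c : ℝ, 0 < c ∧ ∀ x : ℝ, 0 ≤ x → F x = c * x := by
  constructor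
  · intro h
    obtain ⟨C, α, hC, hα, hFx⟩ := F_power F hF h
    have h1 := alpha_one F h C α hC hα hFx
    subst h1
    refine ⟨C, hC, fun x hx => ?_⟩
    rcases hx.eq_or_lt with e | hx
    · rw [← e, F_zero F h]; simp
    · simpa using hFx x hx
  · rintro ⟨c, hc, hFc⟩ Λ ⟨h1, h2, ⟨a, b, hab, ha, hb⟩, h4⟩
    have e : F ∘ Λ = fun x => c * Λ x := funext fun x => hFc _ (h2 x)
    rw [e]
    refine ⟨h1.const_mul c, fun x => mul_nonneg hc.le (h2 x),
      ⟨a, b, hab, mul_ne_zero hc.ne' ha, mul_ne_zero hc.ne' hb⟩, ?_⟩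
    have := TN_scale _ h4 (fun _ => c) (fun _ => 1) (fun _ => hc.le) (fun _ => zero_le_one)
    simpa using this
end

section
/- Let F : [0,∞) → [0,∞) be a non-zero function. The following are equivalent: (1) F∘f is a TN function for every TN function f that is non-zero at two or more points; (2) F∘Λ is a TN function for every Pólya frequency function Λ; (3) there exists c > 0 such that F(x) = c for all x, or F(x) = c·x for all x, or F(x) = c·1_{x>0}, or F(x) = c·1_{x=0}. Moreover, F∘f is a TN function for every TN function f if and only if F(x) = c, F(x) = c·x, or F(x) = c·1_{x>0} for some c > 0. -/
/-- A TN function: a Lebesgue-measurable function whose associated Toeplitz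
kernel is totally non-negative. -/
def IsTNFun (f : ℝ → ℝ) : Prop :=
  Measurable f ∧ IsTNKernel fun x y : ℝ => f (x - y)

namespace TNP

open MeasureTheory

lemma tn_nonneg {f : ℝ → ℝ} (hf : IsTNKernel fun x y : ℝ => f (x - y)) (x : ℝ) : 0 ≤ f x := by
  have := hf 1 (fun _ => x) (fun _ => 0) (Subsingleton.strictMono _) (Subsingleton.strictMono _)
  simpa using this

lemma tn2_raw {K : ℝ → ℝ → ℝ} (hK : IsTNKernel K) {a b c d : ℝ} (h1 : a < b) (h2 : c < d) :
    K a d * K b c ≤ K a c * K b d := by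
  have := hK 2 ![a, b] ![c, d] (by
    intro i j hij; fin_cases i <;> fin_cases j <;> simp_all)
    (by intro i j hij; fin_cases i <;> fin_cases j <;> simp_all)
  rw [Matrix.det_fin_two] at this
  simp at this
  linarith

lemma tn3_raw {K : ℝ → ℝ → ℝ} (hK : IsTNKernel K) {a b c d e g : ℝ} (h1 : a < b) (h1' : b < c)
    (h2 : d < e) (h2' : e < g) :
    0 ≤ K a d * K b e * K c g - K a d * K b g * K c e - K a e * K b d * K c g +
      K a e * K b g * K c d + K a g * K b d * K c e - K a g * K b e * K c d := by
  have := hK 3 ![a, b, c] ![d, e, g] (by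
    intro i j hij; fin_cases i <;> fin_cases j <;> simp_all <;> linarith)
    (by intro i j hij; fin_cases i <;> fin_cases j <;> simp_all <;> linarith)
  rw [Matrix.det_fin_three] at this
  simpa using this

/-- u < v, v' < w with v + v' = u + w -/
lemma tn2 {f : ℝ → ℝ} (hf : IsTNKernel fun x y : ℝ => f (x - y)) {u v v' w : ℝ}
    (h1 : u < v) (h2 : u < v') (h : v + v' = u + w) : f u * f w ≤ f v * f v' := by
  have := tn2_raw hf (a := 0) (b := v' - u) (c := -v) (d := -u) (by linarith) (by linarith)
  simp only [zero_sub, neg_neg] at this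
  have e1 : v' - u - -v = w := by linarith
  have e2 : v' - u - -u = v' := by linarith
  rwa [e1, e2] at this

lemma tn_supp {f : ℝ → ℝ} (hf : IsTNKernel fun x y : ℝ => f (x - y)) {u v w : ℝ}
    (hu : 0 < f u) (hw : 0 < f w) (h1 : u ≤ v) (h2 : v ≤ w) : 0 < f v := by
  rcases eq_or_lt_of_le h1 with rfl | h1
  · exact hu
  rcases eq_or_lt_of_le h2 with rfl | h2
  · exact hw
  have := tn2 hf (u := u) (v := v) (v' := u + w - v) (w := w) h1 (by linarith) (by ring)
  have hp : 0 < f v * f (u + w - v) := lt_of_lt_of_le (mul_pos hu hw) this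
  have := tn_nonneg hf v
  rcases this.lt_or_eq with h | h
  · exact h
  · rw [← h] at hp; simp at hp

lemma tn_mul {K : ℝ → ℝ → ℝ} (hK : IsTNKernel K) (α β : ℝ → ℝ) (ha : ∀ x, 0 ≤ α x)
    (hb : ∀ x, 0 ≤ β x) : IsTNKernel fun x y => α x * (β y * K x y) := by
  intro n x y hx hy
  have h1 := Matrix.det_mul_column (fun i => α (x i))
    (Matrix.of fun i j : Fin n => β (y j) * K (x i) (y j))
  have h2 := Matrix.det_mul_row (fun i => β (y i)) (Matrix.of fun i j : Fin n => K (x i) (y j))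
  simp only [Matrix.of_apply] at h1 h2
  rw [h1, h2]
  have := hK n x y hx hy
  have p1 : 0 ≤ ∏ i, α (x i) := Finset.prod_nonneg fun i _ => ha _
  have p2 : 0 ≤ ∏ i, β (y i) := Finset.prod_nonneg fun i _ => hb _
  positivity

lemma tn_smul {K : ℝ → ℝ → ℝ} (hK : IsTNKernel K) {c : ℝ} (hc : 0 ≤ c) :
    IsTNKernel fun x y => c * K x y := by
  have := tn_mul hK (fun _ => c) (fun _ => 1) (fun _ => hc) (fun _ => zero_le_one)
  simpa using this

lemma tn_transpose {K : ℝ → ℝ → ℝ} (hK : IsTNKernel K) : IsTNKernel fun x y => K y x := by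
  intro n x y hx hy
  rw [← Matrix.det_transpose]
  exact hK n y x hy hx

lemma tn_const {c : ℝ} (hc : 0 ≤ c) : IsTNKernel fun _ _ : ℝ => c := by
  intro n x y _ _
  rcases n with _ | _ | n
  · simp
  · simpa using hc
  · rw [Matrix.det_zero_of_row_eq (i := 0) (j := 1) (by simp)]
    rfl

/-- monotone 0-1 matrices -/
lemma det01 {n : ℕ} (B : Fin n → Fin n → Prop) [∀ i j, Decidable (B i j)]
    (hB : ∀ i i' j j', i ≤ i' → j' ≤ j → B i j → B i' j') :
    0 ≤ (Matrix.of fun i j : Fin n => if B i j then (1 : ℝ) else 0).det := by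
  classical
  let s : Fin n → Finset (Fin n) := fun i => Finset.univ.filter fun j => B i j
  have smono : ∀ i i', i ≤ i' → s i ⊆ s i' := by
    intro i i' h j hj
    simp only [s, Finset.mem_filter, Finset.mem_univ, true_and] at hj ⊢
    exact hB i i' j j h le_rfl hj
  by_cases hinj : ∃ i i', i < i' ∧ (s i).card = (s i').card
  · obtain ⟨i, i', h, hc⟩ := hinj
    have := Finset.eq_of_subset_of_card_le (smono i i' h.le) hc.ge
    rw [Matrix.det_zero_of_row_eq h.ne]
    ext j
    have : B i j ↔ B i' j := by
      have := congrArg (fun t => j ∈ t) this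
      simpa [s] using this
    simp [this]
  · push Not at hinj
    have hsm : StrictMono fun i => (s i).card := by
      intro i i' h
      exact lt_of_le_of_ne (Finset.card_le_card (smono i i' h.le)) (hinj i i' h)
    by_cases h0 : ∃ i, s i = ∅
    · obtain ⟨i, hi⟩ := h0
      rw [Matrix.det_eq_zero_of_row_eq_zero i]
      intro j
      have : j ∉ s i := by simp [hi]
      simp only [s, Finset.mem_filter, Finset.mem_univ, true_and] at this
      simp [this]
    · push Not at h0
      have hge : ∀ k : ℕ, ∀ hk : k < n, k + 1 ≤ (s ⟨k, hk⟩).card := by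
        intro k
        induction k with
        | zero => intro hk; exact Finset.card_pos.mpr (h0 _)
        | succ k ih =>
          intro hk
          have h1 := ih (by omega)
          have h2 : (s ⟨k, by omega⟩).card < (s ⟨k+1, hk⟩).card :=
            hsm (show (⟨k, by omega⟩ : Fin n) < ⟨k+1, hk⟩ by simp)
          omega
      have hle : ∀ k : ℕ, ∀ i : Fin n, i.val + k + 1 = n → (s i).card + k ≤ n := by
        intro k
        induction k with
        | zero => intro i _; simpa using Finset.card_le_univ (s i)
        | succ k ih =>
          intro i hi
          have h1 := ih ⟨i.val + 1, by omega⟩ (by simp; omega)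
          have h2 : (s i).card < (s ⟨i.val + 1, by omega⟩).card :=
            hsm (show i < (⟨i.val + 1, by omega⟩ : Fin n) by simp [Fin.lt_def])
          omega
      have hcard : ∀ i : Fin n, (s i).card = i.val + 1 := by
        intro i
        have h1 := hge i.val i.2
        have h2 := hle (n - 1 - i.val) i (by omega)
        have : (⟨i.val, i.2⟩ : Fin n) = i := rfl
        rw [this] at h1
        omega
      have hlow : ∀ i j, B i j → j ≤ i := by
        intro i j h
        have : Finset.Iic j ⊆ s i := by
          intro k hk
          simp only [s, Finset.mem_filter, Finset.mem_univ, true_and]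
          exact hB i i j k le_rfl (Finset.mem_Iic.mp hk) h
        have := Finset.card_le_card this
        rw [hcard, Fin.card_Iic] at this
        rw [Fin.le_def]; omega
      have hdiag : ∀ i, B i i := by
        intro i
        by_contra h
        have : s i ⊆ Finset.Iio i := by
          intro k hk
          simp only [s, Finset.mem_filter, Finset.mem_univ, true_and] at hk
          rw [Finset.mem_Iio]
          rcases lt_or_eq_of_le (hlow i k hk) with h' | h'
          · exact h'
          · subst h'; exact absurd hk h
        have := Finset.card_le_card this
        rw [hcard, Fin.card_Iio] at this
        omega
      rw [Matrix.det_of_lowerTriangular]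
      · simp [hdiag]
      · intro i j hij
        have hij' : i < j := by simpa using hij
        have : ¬ B i j := fun h => absurd (hlow i j h) (not_le.mpr hij')
        simp [this]

open Classical in
lemma tn_upper (A : Set ℝ) (hA : IsUpperSet A) :
    IsTNKernel fun x y : ℝ => if x - y ∈ A then (1 : ℝ) else 0 := by
  intro n x y hx hy
  apply det01 (fun i j => x i - y j ∈ A)
  intro i i' j j' h1 h2 h
  refine hA ?_ h
  have := hx.monotone h1
  have := hy.monotone h2
  linarith

open Classical in
lemma tn_lower (A : Set ℝ) (hA : IsLowerSet A) :
    IsTNKernel fun x y : ℝ => if x - y ∈ A then (1 : ℝ) else 0 := by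
  have h : IsUpperSet {x : ℝ | -x ∈ A} := by
    intro a b hab ha
    exact hA (neg_le_neg hab) ha
  have := tn_transpose (tn_upper _ h)
  simpa using this

lemma tn_delta : IsTNKernel fun x y : ℝ => if x - y = 0 then (1 : ℝ) else 0 := by
  classical
  intro n x y hx hy
  by_cases h : ∀ i, ∃ j, x i = y j
  · choose g hg using h
    have gm : StrictMono g := by
      intro i i' hi
      have := hx hi
      rw [hg i, hg i'] at this
      exact hy.lt_iff_lt.mp this
    have gid : g = id := by
      funext i
      exact congrArg (fun e : Fin n ≃o Fin n => e i) (Subsingleton.elim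
        (StrictMono.orderIsoOfSurjective g gm (Finite.surjective_of_injective gm.injective))
        (OrderIso.refl _))
    have : (Matrix.of fun i j : Fin n => if x i - y j = 0 then (1 : ℝ) else 0) = 1 := by
      ext i j
      have hi := hg i
      rw [gid] at hi
      simp only [id] at hi
      simp only [Matrix.of_apply, Matrix.one_apply, hi, sub_eq_zero, hy.injective.eq_iff]
    rw [this]; simp
  · push Not at h
    obtain ⟨i, hi⟩ := h
    rw [Matrix.det_eq_zero_of_row_eq_zero i]
    intro j
    simp [sub_eq_zero, hi j]

end TNP

namespace TNP

open MeasureTheory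

lemma det_prod_nonneg {L M : ℝ → ℝ → ℝ} (hL : IsTNKernel L) (hM : IsTNKernel M) {n : ℕ}
    {x y : Fin n → ℝ} (hx : StrictMono x) (hy : StrictMono y) (t : Fin n → ℝ) :
    0 ≤ (Matrix.of fun i j => L (x i) (t j)).det * (Matrix.of fun i j => M (t i) (y j)).det := by
  by_cases ht : Function.Injective t
  · set σ := Tuple.sort t
    have hm : StrictMono (t ∘ σ) :=
      (Tuple.monotone_sort t).strictMono_of_injective (ht.comp σ.injective)
    have h1 := hL n x (t ∘ σ) hx hm
    have h2 := hM n (t ∘ σ) y hm hy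
    have e1 := Matrix.det_permute' σ (Matrix.of fun i j => L (x i) (t j))
    have e2 := Matrix.det_permute σ (Matrix.of fun i j => M (t i) (y j))
    have e1' : (Matrix.of fun i j => L (x i) ((t ∘ σ) j)) =
      (Matrix.of fun i j => L (x i) (t j)).submatrix id σ := rfl
    have e2' : (Matrix.of fun i j => M ((t ∘ σ) i) (y j)) =
      (Matrix.of fun i j => M (t i) (y j)).submatrix σ id := rfl
    rw [e1', e1] at h1
    rw [e2', e2] at h2
    rcases Int.units_eq_one_or (Equiv.Perm.sign σ) with h | h
    · rw [h] at h1 h2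
      simp at h1 h2
      positivity
    · rw [h] at h1 h2
      simp at h1 h2
      exact mul_nonneg_of_nonpos_of_nonpos h1 h2
  · have : ∃ a b, t a = t b ∧ a ≠ b := by
      simpa [Function.Injective] using ht
    obtain ⟨a, b, h, hab⟩ := this
    rw [Matrix.det_zero_of_column_eq (M := Matrix.of fun i j => L (x i) (t j)) hab (by simp [h])]
    simp

lemma integral_perm {n : ℕ} (τ : Equiv.Perm (Fin n)) (g : (Fin n → ℝ) → ℝ) :
    ∫ t, g (t ∘ τ) = ∫ t, g t := by
  have h := volume_measurePreserving_piCongrLeft (fun _ : Fin n => ℝ) τ.symm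
  have h2 := h.integral_comp (MeasurableEquiv.measurableEmbedding _) g
  rw [← h2]
  congr 1
  ext t
  congr 1
  ext i
  have := MeasurableEquiv.piCongrLeft_apply_apply (β := fun _ : Fin n => ℝ) (e := τ.symm) (x := t) (i := τ i)
  simpa using this.symm

lemma integrable_perm {n : ℕ} (τ : Equiv.Perm (Fin n)) (g : (Fin n → ℝ) → ℝ) (hg : Integrable g) :
    Integrable fun t => g (t ∘ τ) := by
  have h := volume_measurePreserving_piCongrLeft (fun _ : Fin n => ℝ) τ.symm
  have h2 := (h.integrable_comp hg.aestronglyMeasurable).mpr hg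
  convert h2 using 1
  ext t
  simp only [Function.comp]
  congr 1
  ext i
  have := MeasurableEquiv.piCongrLeft_apply_apply (β := fun _ : Fin n => ℝ) (e := τ.symm) (x := t) (i := τ i)
  simpa using this.symm

lemma tn_comp {L M : ℝ → ℝ → ℝ} (hL : IsTNKernel L) (hM : IsTNKernel M)
    (hI : ∀ x y, Integrable fun t => L x t * M t y) :
    IsTNKernel fun x y => ∫ t, L x t * M t y := by
  intro n x y hx hy
  set A : (Fin n → ℝ) → ℝ := fun t => (Matrix.of fun i j => L (x i) (t j)).det with hA
  set g : (Fin n → ℝ) → ℝ := fun t => A t * ∏ i, M (t i) (y i) with hg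
  have expand : ∀ t, g t = ∑ σ : Equiv.Perm (Fin n), ((Equiv.Perm.sign σ : ℤ) : ℝ) *
      ∏ i, (L (x (σ i)) (t i) * M (t i) (y i)) := by
    intro t
    simp only [hg, hA, Matrix.det_apply', Finset.sum_mul, Matrix.of_apply]
    refine Finset.sum_congr rfl fun σ _ => ?_
    rw [Finset.prod_mul_distrib]; ring
  have hint : ∀ σ : Equiv.Perm (Fin n), Integrable fun t : Fin n → ℝ =>
      ∏ i, (L (x (σ i)) (t i) * M (t i) (y i)) := by
    intro σ
    exact Integrable.fintype_prod (f := fun i s => L (x (σ i)) s * M s (y i)) fun i => hI _ _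
  have gint : Integrable g := by
    have : g = fun t => ∑ σ : Equiv.Perm (Fin n), ((Equiv.Perm.sign σ : ℤ) : ℝ) *
      ∏ i, (L (x (σ i)) (t i) * M (t i) (y i)) := funext expand
    rw [this]
    exact integrable_finsetSum _ fun σ _ => (hint σ).const_mul _
  have hdet : (Matrix.of fun i j : Fin n => ∫ t, L (x i) t * M t (y j)).det = ∫ t, g t := by
    simp only [expand]
    rw [integral_finsetSum _ fun σ _ => (hint σ).const_mul _, Matrix.det_apply']
    refine Finset.sum_congr rfl fun σ _ => ?_
    rw [integral_const_mul]
    congr 1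
    exact (integral_fintype_prod_volume_eq_prod (fun i s => L (x (σ i)) s * M s (y i))).symm
  have hsum : ∑ τ : Equiv.Perm (Fin n), ∫ t, g (t ∘ τ) =
      ∫ t, A t * (Matrix.of fun i j => M (t i) (y j)).det := by
    rw [← integral_finsetSum _ fun τ _ => integrable_perm τ g gint]
    congr 1
    ext t
    rw [Matrix.det_apply', Finset.mul_sum]
    refine Finset.sum_congr rfl fun τ _ => ?_
    have e1 := Matrix.det_permute' τ (Matrix.of fun i j => L (x i) (t j))
    have e1' : A (t ∘ τ) = ((Matrix.of fun i j => L (x i) (t j)).submatrix id τ).det := rfl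
    simp only [hg]
    rw [e1', e1]
    simp only [hA, Function.comp, Matrix.of_apply]
    ring
  simp only [integral_perm, Finset.sum_const, Finset.card_univ] at hsum
  have hnn : 0 ≤ ∫ t, A t * (Matrix.of fun i j => M (t i) (y j)).det :=
    integral_nonneg fun t => det_prod_nonneg hL hM hx hy t
  rw [← hsum, nsmul_eq_mul] at hnn
  rw [hdet]
  have : (0 : ℝ) < (Fintype.card (Equiv.Perm (Fin n)) : ℝ) := by
    exact_mod_cast Fintype.card_pos
  exact nonneg_of_mul_nonneg_right hnn this

end TNP

namespace TNP

open MeasureTheory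

/-- one-sided function -/
noncomputable def os (a : ℝ → ℝ) (x : ℝ) : ℝ := if 0 ≤ x then a x else 0

lemma tn_exp (l : ℝ) : IsTNKernel fun x y : ℝ => os (fun t => Real.exp (-l * t)) (x - y) := by
  classical
  have h := tn_mul (tn_upper (Set.Ici 0) (isUpperSet_Ici _)) (fun x => Real.exp (-l * x))
    (fun y => Real.exp (l * y)) (fun _ => (Real.exp_pos _).le) (fun _ => (Real.exp_pos _).le)
  convert h using 3 with x y
  unfold os
  by_cases hxy : 0 ≤ x - y
  · simp only [Set.mem_Ici, hxy, if_true, mul_one, ← Real.exp_add]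
    ring_nf
  · simp only [Set.mem_Ici, hxy, if_false, mul_zero]

lemma os_mul (a b : ℝ → ℝ) (x y : ℝ) : (fun t => os a (x - t) * os b (t - y)) =
    (Set.Icc y x).indicator fun t => a (x - t) * b (t - y) := by
  ext t
  unfold os Set.indicator
  by_cases h1 : t ≤ x <;> by_cases h2 : y ≤ t <;>
    simp [h1, h2]

lemma os_conv {a b : ℝ → ℝ} (ha : Continuous a) (hb : Continuous b)
    (hA : IsTNKernel fun x y : ℝ => os a (x - y)) (hB : IsTNKernel fun x y : ℝ => os b (x - y))
    (c : ℝ → ℝ)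
    (hc : ∀ x y, y ≤ x → ∫ t in y..x, a (x - t) * b (t - y) = c (x - y)) :
    IsTNKernel fun x y : ℝ => os c (x - y) := by
  have cont : ∀ x y, Continuous fun t => a (x - t) * b (t - y) := by
    intro x y; fun_prop
  have := tn_comp hA hB (by
    intro x y
    rw [os_mul a b x y, integrable_indicator_iff measurableSet_Icc]
    exact (cont x y).continuousOn.integrableOn_compact isCompact_Icc)
  convert this using 3 with x y
  rw [os_mul a b x y, integral_indicator measurableSet_Icc]
  unfold os
  by_cases h : 0 ≤ x - y
  · rw [if_pos h, integral_Icc_eq_integral_Ioc, ← intervalIntegral.integral_of_le (by linarith),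
      hc x y (by linarith)]
  · rw [if_neg h, Set.Icc_eq_empty (by intro h'; apply h; linarith)]
    simp

noncomputable def p3 (x : ℝ) : ℝ := Real.exp (-x) - Real.exp (-3 * x)
noncomputable def p4 (x : ℝ) : ℝ := Real.exp (-x) - 3 * Real.exp (-3 * x) + 2 * Real.exp (-4 * x)

lemma tn_p3 : IsTNKernel fun x y : ℝ => os p3 (x - y) := by
  have h := os_conv (a := fun t => Real.exp (-1 * t)) (b := fun t => Real.exp (-3 * t))
    (by fun_prop) (by fun_prop) (tn_exp 1) (tn_exp 3) (fun x => p3 x / 2) (by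
      intro x y hxy
      have hd : ∀ t ∈ Set.uIcc y x, HasDerivAt (fun t => - Real.exp (-x - 2 * t + 3 * y) / 2)
          (Real.exp (-1 * (x - t)) * Real.exp (-3 * (t - y))) t := by
        intro t _
        have h1 : HasDerivAt (fun t : ℝ => -x - 2 * t + 3 * y) (-2) t := by
          have := (((hasDerivAt_id t).const_mul 2).const_sub (-x)).add_const (3 * y)
          simpa using this
        have h2 := (h1.exp.neg).div_const 2
        refine h2.congr_deriv ?_
        have : Real.exp (-1 * (x - t)) * Real.exp (-3 * (t - y)) = Real.exp (-x - 2 * t + 3 * y) := by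
          rw [← Real.exp_add]; ring_nf
        rw [this]; ring
      rw [intervalIntegral.integral_eq_sub_of_hasDerivAt hd
        ((by fun_prop : Continuous _).intervalIntegrable _ _)]
      unfold p3
      ring_nf)
  have h2 := tn_smul h (c := 2) (by norm_num)
  convert h2 using 3 with x y
  unfold os
  split_ifs <;> ring

lemma tn_p4 : IsTNKernel fun x y : ℝ => os p4 (x - y) := by
  have h := os_conv (a := fun t => Real.exp (-4 * t)) (b := p3)
    (by fun_prop) (by unfold p3; fun_prop) (tn_exp 4) tn_p3 (fun x => p4 x / 3) (by
      intro x y hxy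
      have hd : ∀ t ∈ Set.uIcc y x, HasDerivAt (fun t => Real.exp (-4 * x + 3 * t + y) / 3 -
            Real.exp (-4 * x + 1 * t + 3 * y))
          (Real.exp (-4 * (x - t)) * p3 (t - y)) t := by
        intro t _
        have h1 : ∀ c d : ℝ, HasDerivAt (fun t : ℝ => -4 * x + c * t + d) c t := by
          intro c d
          have := (((hasDerivAt_id t).const_mul c).const_add (-4 * x)).add_const d
          simpa using this
        have h2 := ((h1 3 y).exp.div_const 3).sub (h1 1 (3 * y)).exp
        refine h2.congr_deriv ?_
        unfold p3
        rw [mul_sub, ← Real.exp_add, ← Real.exp_add]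
        ring_nf
      rw [intervalIntegral.integral_eq_sub_of_hasDerivAt hd
        ((by unfold p3; fun_prop : Continuous _).intervalIntegrable _ _)]
      unfold p4
      ring_nf)
  have h2 := tn_smul h (c := 3) (by norm_num)
  convert h2 using 3 with x y
  unfold os
  split_ifs <;> ring

lemma tn_abs : IsTNKernel fun x y : ℝ => Real.exp (-|x - y|) := by
  have hE := tn_exp 1
  have e : ∀ x y : ℝ, (fun t => os (fun t => Real.exp (-1 * t)) (x - t) *
      os (fun t => Real.exp (-1 * t)) (y - t)) =
      (Set.Iic (min x y)).indicator fun t => Real.exp (-x - y) * Real.exp (2 * t) := by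
    intro x y
    ext t
    unfold os Set.indicator
    by_cases h1 : t ≤ x <;> by_cases h2 : t ≤ y <;>
      simp [h1, h2, ← Real.exp_add]
    ring_nf
  have := tn_comp hE (tn_transpose hE) (by
    intro x y
    rw [e x y, integrable_indicator_iff measurableSet_Iic]
    exact (integrableOn_exp_mul_Iic (by norm_num) _).const_mul _)
  have h2 := tn_smul this (c := 2) (by norm_num)
  convert h2 using 3 with x y
  rw [e x y, integral_indicator measurableSet_Iic, integral_const_mul,
    integral_exp_mul_Iic (by norm_num)]
  rcases le_total x y with h | h
  · rw [min_eq_left h, abs_of_nonpos (by linarith)]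
    have : Real.exp (-(-(x - y))) = Real.exp (-x - y) * Real.exp (2 * x) := by
      rw [← Real.exp_add]; ring_nf
    rw [this]; ring
  · rw [min_eq_right h, abs_of_nonneg (by linarith)]
    have : Real.exp (-(x - y)) = Real.exp (-x - y) * Real.exp (2 * y) := by
      rw [← Real.exp_add]; ring_nf
    rw [this]; ring

lemma os_integrable_exp {l : ℝ} (hl : 0 < l) : Integrable (os fun t => Real.exp (-l * t)) := by
  have : (os fun t => Real.exp (-l * t)) = (Set.Ici 0).indicator fun t => Real.exp (-l * t) := by
    ext t; simp [os, Set.indicator]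
  rw [this, integrable_indicator_iff measurableSet_Ici, integrableOn_Ici_iff_integrableOn_Ioi]
  exact integrableOn_exp_mul_Ioi (by linarith) 0

lemma pf_exp {c : ℝ} (hc : 0 < c) :
    IsPolyaFrequencyFunction fun x => c * os (fun t => Real.exp (-1 * t)) x := by
  refine ⟨(os_integrable_exp one_pos).const_mul c, ?_, ⟨0, 1, by norm_num, ?_, ?_⟩,
    tn_smul (tn_exp 1) hc.le⟩
  · intro x; exact mul_nonneg hc.le (tn_nonneg (tn_exp 1) x)
  · simp [os, hc.ne']
  · simp [os, hc.ne']

lemma pf_p3 : IsPolyaFrequencyFunction (os p3) := by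
  refine ⟨?_, tn_nonneg tn_p3, ⟨1, 2, by norm_num, ?_, ?_⟩, tn_p3⟩
  · convert (os_integrable_exp one_pos).sub (os_integrable_exp (l := 3) (by norm_num)) using 1
    ext x
    simp only [os, p3, Pi.sub_apply]
    split_ifs <;> simp
  · have : Real.exp (-3 * 1) < Real.exp (-1 : ℝ) := Real.exp_lt_exp.mpr (by norm_num)
    exact (by rw [os, if_pos (by norm_num), p3]; linarith : (0:ℝ) < os p3 _).ne'
  · have : Real.exp (-3 * 2) < Real.exp (-2 : ℝ) := Real.exp_lt_exp.mpr (by norm_num)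
    exact (by rw [os, if_pos (by norm_num), p3]; linarith : (0:ℝ) < os p3 _).ne'

lemma p4_eq (x : ℝ) : p4 x = Real.exp (-x) * ((1 - Real.exp (-x)) ^ 2 * (1 + 2 * Real.exp (-x))) := by
  unfold p4
  have h3 : Real.exp (-3 * x) = Real.exp (-x) ^ 3 := by rw [← Real.exp_nat_mul]; ring_nf
  have h4 : Real.exp (-4 * x) = Real.exp (-x) ^ 4 := by rw [← Real.exp_nat_mul]; ring_nf
  rw [h3, h4]; ring

lemma p4_pos {x : ℝ} (hx : 0 < x) : 0 < p4 x := by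
  rw [p4_eq]
  have : Real.exp (-x) < 1 := by rw [Real.exp_lt_one_iff]; linarith
  have h := Real.exp_pos (-x)
  have : 0 < 1 - Real.exp (-x) := by linarith
  positivity

lemma pf_p4 : IsPolyaFrequencyFunction (os p4) := by
  refine ⟨?_, tn_nonneg tn_p4, ⟨1, 2, by norm_num, ?_, ?_⟩, tn_p4⟩
  · have := ((os_integrable_exp one_pos).sub ((os_integrable_exp (l := 3) (by norm_num)).const_mul 3)).add
      ((os_integrable_exp (l := 4) (by norm_num)).const_mul 2)
    refine this.congr (Filter.Eventually.of_forall fun x => ?_)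
    simp only [os, p4, Pi.sub_apply, Pi.add_apply]
    split_ifs <;> simp
  · have := p4_pos (x := 1) one_pos
    simp [os, this.ne']
  · have := p4_pos (x := 2) two_pos
    simp [os, this.ne']

lemma pf_abs {c : ℝ} (hc : 0 < c) :
    IsPolyaFrequencyFunction fun x => c * Real.exp (-|x|) := by
  refine ⟨Integrable.const_mul ?_ c, ?_, ⟨0, 1, by norm_num, ?_, ?_⟩,
    tn_smul tn_abs hc.le⟩
  · have h1 := os_integrable_exp one_pos
    have h2 := h1.comp_neg
    refine (h1.add h2).mono' (by fun_prop) (Filter.Eventually.of_forall fun x => ?_)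
    rw [Real.norm_eq_abs, abs_of_pos (Real.exp_pos _)]
    simp only [Pi.add_apply, os]
    rcases le_total 0 x with h | h
    · rw [abs_of_nonneg h, if_pos h, neg_one_mul]
      split_ifs <;> [(have := Real.exp_pos (-1 * -x); linarith); simp]
    · rw [abs_of_nonpos h, if_pos (c := 0 ≤ -x) (by linarith), neg_one_mul, neg_one_mul]
      split_ifs <;> [(have := Real.exp_pos (-x); linarith); simp]
  · intro x; positivity
  · simp [hc.ne']
  · simp [hc.ne']

end TNP

namespace TNP

lemma tele (Z : ℕ → ℝ) (N : ℕ) :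
    ∑ r ∈ Finset.range N, (2 * Z (r + 1) - Z (r + 2) - Z r) = Z 1 - Z 0 + Z N - Z (N + 1) := by
  induction N with
  | zero => simp
  | succ N ih => rw [Finset.sum_range_succ, ih]; ring

lemma convex_zero (S : ℕ → ℝ) (h0 : S 0 = 0) (hc : ∀ k, 0 ≤ S (k + 2) - 2 * S (k + 1) + S k)
    (k : ℕ) : k * S 1 ≤ S k := by
  have h1 : ∀ k, S 1 ≤ S (k + 1) - S k := by
    intro k
    induction k with
    | zero => simp [h0]
    | succ k ih => have := hc k; linarith
  induction k with
  | zero => simp [h0]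
  | succ k ih => have := h1 k; push_cast; linarith

lemma log_over (C x : ℝ) (h : ∀ k : ℕ, k * x ≤ C * Real.log (1 + k)) : x ≤ 0 := by
  have hC : 0 ≤ |C| := abs_nonneg C
  have h2 : ∀ k : ℕ, k * x ≤ |C| * Real.log (1 + k) := by
    intro k
    refine (h k).trans (mul_le_mul_of_nonneg_right (le_abs_self C) (Real.log_nonneg ?_))
    have : (0:ℝ) ≤ k := Nat.cast_nonneg k
    linarith
  by_contra hx
  push Not at hx
  have ht : Filter.Tendsto (fun k : ℕ => Real.log (1 + k) / (1 + k : ℝ)) Filter.atTop (nhds 0) := by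
    have h1 := Real.tendsto_pow_log_div_mul_add_atTop 1 0 1 one_ne_zero
    have h2 : Filter.Tendsto (fun k : ℕ => (1 + k : ℝ)) Filter.atTop Filter.atTop :=
      Filter.tendsto_atTop_add_const_left _ _ tendsto_natCast_atTop_atTop
    have := h1.comp h2
    simpa [Function.comp_def] using this
  have ht2 := ht.const_mul |C|
  rw [mul_zero] at ht2
  obtain ⟨k, hk, hk1⟩ := ((ht2.eventually (gt_mem_nhds (half_pos hx))).and
    (Filter.eventually_ge_atTop 1)).exists
  have hk1' : (1:ℝ) ≤ k := by exact_mod_cast hk1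
  have := h2 k
  rw [← mul_div_assoc, div_lt_iff₀ (by positivity)] at hk
  nlinarith

lemma toda_scalar (N : ℕ) (T : ℕ → ℕ → ℝ) (α β : ℝ)
    (hpos : ∀ r k, r ≤ N + 1 → 0 < T r k) (h0 : ∀ r, r ≤ N + 1 → T r 0 = 1)
    (hl : ∀ k, T 0 k = α ^ k) (hr : ∀ k, T (N + 1) k = β ^ k)
    (toda : ∀ r k, r < N → T (r + 1) (k + 1) ^ 2 =
      T (r + 1) (k + 2) * T (r + 1) k + T (r + 2) (k + 1) * T r (k + 1)) (r : ℕ) (hrN : r < N) :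
    Real.log (1 + 1 / (r + 1)) ≤
      2 * Real.log (T (r + 1) 1) - Real.log (T r 1) - Real.log (T (r + 2) 1) := by
  set L : ℕ → ℕ → ℝ := fun r k => Real.log (T r k) with hL
  set V : ℕ → ℕ → ℝ := fun r k => 2 * L (r + 1) k - L r k - L (r + 2) k with hV
  set W : ℕ → ℕ → ℝ := fun r k => 2 * L r (k + 1) - L r (k + 2) - L r k with hW
  set Vs : ℕ → ℕ → ℝ := fun r k => Real.log (r + 1 + k) - Real.log (r + 1) with hVs
  set Ws : ℕ → ℕ → ℝ := fun r k => Real.log (r + 1 + k) - Real.log (k + 1) with hWs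
  set e : ℕ → ℕ → ℝ := fun r k => Vs r k - V r k with he
  set z : ℕ → ℕ → ℝ := fun r k => W r k - Ws r k with hz
  have expV : ∀ r k, r < N → Real.exp (- V r k) = T r k * T (r + 2) k / T (r + 1) k ^ 2 := by
    intro r k hr
    have p0 := hpos r k (by omega)
    have p1 := hpos (r + 1) k (by omega)
    have p2 := hpos (r + 2) k (by omega)
    have : - V r k = Real.log (T r k * T (r + 2) k / T (r + 1) k ^ 2) := by
      rw [Real.log_div (by positivity) (by positivity), Real.log_mul (by positivity) (by positivity),
        Real.log_pow]
      simp only [hV, hL]; push_cast; ring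
    rw [this, Real.exp_log (by positivity)]
  have expW : ∀ r k, r ≤ N + 1 → Real.exp (- W r k) = T r k * T r (k + 2) / T r (k + 1) ^ 2 := by
    intro r k hr
    have p0 := hpos r k (by omega)
    have p1 := hpos r (k + 1) (by omega)
    have p2 := hpos r (k + 2) (by omega)
    have : - W r k = Real.log (T r k * T r (k + 2) / T r (k + 1) ^ 2) := by
      rw [Real.log_div (by positivity) (by positivity), Real.log_mul (by positivity) (by positivity),
        Real.log_pow]
      simp only [hW, hL]; push_cast; ring
    rw [this, Real.exp_log (by positivity)]
  have rel : ∀ r k, r < N → Real.exp (- V r (k + 1)) + Real.exp (- W (r + 1) k) = 1 := by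
    intro r k hr
    rw [expV r _ hr, expW _ _ (by omega)]
    have p1 := hpos (r + 1) (k + 1) (by omega)
    have := toda r k hr
    field_simp
    linarith
  have rels : ∀ r k : ℕ, Real.exp (- Vs r (k + 1)) + Real.exp (- Ws (r + 1) k) = 1 := by
    intro r k
    simp only [hVs, hWs]
    rw [neg_sub, neg_sub, Real.exp_sub, Real.exp_sub]
    repeat rw [Real.exp_log (by positivity)]
    push_cast
    have : (r:ℝ) + 1 + (k + 1) = r + 1 + 1 + k := by ring
    rw [this, ← add_div, div_eq_one_iff_eq (by positivity)]
    ring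
  have sgn : ∀ r k, r < N → (0 < e r (k + 1) ↔ 0 < z (r + 1) k) := by
    intro r k hr
    have h1 := rel r k hr
    have h2 := rels r k
    have a1 : 0 < e r (k + 1) ↔ Real.exp (- Vs r (k + 1)) < Real.exp (- V r (k + 1)) := by
      rw [Real.exp_lt_exp]; simp only [he]; constructor <;> intro <;> linarith
    have a2 : 0 < z (r + 1) k ↔ Real.exp (- W (r + 1) k) < Real.exp (- Ws (r + 1) k) := by
      rw [Real.exp_lt_exp]; simp only [hz]; constructor <;> intro <;> linarith
    rw [a1, a2]; constructor <;> intro <;> linarith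
  have lap : ∀ r k, e r (k + 2) - 2 * e r (k + 1) + e r k =
      2 * z (r + 1) k - z (r + 2) k - z r k := by
    intro r k
    simp only [he, hz, hV, hW, hVs, hWs]
    push_cast
    have q1 : (r:ℝ) + 1 + (k + 2) = r + 2 + 1 + k := by ring
    have q2 : (r:ℝ) + 1 + (k + 1) = r + 1 + 1 + k := by ring
    rw [q1, q2]
    ring
  set E : ℕ → ℕ → ℝ := fun r k => max (e r k) 0 with hE
  set Z : ℕ → ℕ → ℝ := fun r k => max (z r k) 0 with hZ
  have kato : ∀ r k, r < N → 2 * Z (r + 1) k - Z (r + 2) k - Z r k ≤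
      E r (k + 2) - 2 * E r (k + 1) + E r k := by
    intro r k hr
    have b1 : z (r + 2) k ≤ Z (r + 2) k := le_max_left _ _
    have b2 : z r k ≤ Z r k := le_max_left _ _
    have b1' : 0 ≤ Z (r + 2) k := le_max_right _ _
    have b2' : 0 ≤ Z r k := le_max_right _ _
    have c1 : e r (k + 2) ≤ E r (k + 2) := le_max_left _ _
    have c2 : e r k ≤ E r k := le_max_left _ _
    have c1' : 0 ≤ E r (k + 2) := le_max_right _ _
    have c2' : 0 ≤ E r k := le_max_right _ _
    have hs := sgn r k hr
    by_cases h : 0 < e r (k + 1)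
    · have h' := hs.mp h
      have d1 : E r (k + 1) = e r (k + 1) := max_eq_left h.le
      have d2 : Z (r + 1) k = z (r + 1) k := max_eq_left h'.le
      have := lap r k
      rw [d1, d2]; linarith
    · have h' : ¬ 0 < z (r + 1) k := fun h' => h (hs.mpr h')
      have d1 : E r (k + 1) = 0 := max_eq_right (not_lt.mp h)
      have d2 : Z (r + 1) k = 0 := max_eq_right (not_lt.mp h')
      rw [d1, d2]; linarith
  have z0 : ∀ k, Z 0 k = 0 := by
    intro k
    apply max_eq_right
    simp only [hz, hW, hWs, hL, hl, Real.log_pow]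
    push_cast
    have : (0:ℝ) + 1 + k = k + 1 := by ring
    rw [this]
    apply le_of_eq; ring
  have zn : ∀ k, Z (N + 1) k = 0 := by
    intro k
    apply max_eq_right
    simp only [hz, hW, hWs, hL, hr, Real.log_pow]
    have : Real.log (k + 1) ≤ Real.log (((N + 1 : ℕ) : ℝ) + 1 + k) := by
      apply Real.log_le_log (by positivity)
      have : (0:ℝ) ≤ ((N + 1 : ℕ) : ℝ) := Nat.cast_nonneg _
      linarith
    push_cast at this ⊢
    linarith
  set S : ℕ → ℝ := fun k => ∑ r ∈ Finset.range N, E r k with hS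
  have Sconv : ∀ k, 0 ≤ S (k + 2) - 2 * S (k + 1) + S k := by
    intro k
    have h1 : ∑ r ∈ Finset.range N, (2 * Z (r + 1) k - Z (r + 2) k - Z r k) ≤
        ∑ r ∈ Finset.range N, (E r (k + 2) - 2 * E r (k + 1) + E r k) :=
      Finset.sum_le_sum fun r hr => kato r k (Finset.mem_range.mp hr)
    rw [tele (fun r => Z r k)] at h1
    simp only [z0, zn] at h1
    rw [Finset.sum_add_distrib, Finset.sum_sub_distrib, ← Finset.mul_sum] at h1
    have b1 : 0 ≤ Z 1 k := le_max_right _ _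
    have b2 : 0 ≤ Z N k := le_max_right _ _
    simp only [hS]
    linarith
  have S0 : S 0 = 0 := by
    apply Finset.sum_eq_zero
    intro r hr
    have hr := Finset.mem_range.mp hr
    apply max_eq_right
    simp only [he, hV, hVs, hL]
    rw [h0 r (by omega), h0 (r + 1) (by omega), h0 (r + 2) (by omega)]
    simp
  have Sle : ∀ k, S k ≤ N * Real.log (1 + k) := by
    intro k
    have : ∀ r ∈ Finset.range N, E r k ≤ Real.log (1 + k) := by
      intro r hr
      have hr := Finset.mem_range.mp hr
      have hlk : 0 ≤ Real.log (1 + (k:ℝ)) := Real.log_nonneg (by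
        have : (0:ℝ) ≤ k := Nat.cast_nonneg k
        linarith)
      apply max_le _ hlk
      have hVnn : 0 ≤ V r k := by
        rcases k with _ | k
        · simp only [hV, hL]
          rw [h0 r (by omega), h0 (r + 1) (by omega), h0 (r + 2) (by omega)]
          simp
        · have := rel r k hr
          have := Real.exp_pos (- W (r + 1) k)
          have h : Real.exp (- V r (k + 1)) ≤ Real.exp 0 := by rw [Real.exp_zero]; linarith
          rw [Real.exp_le_exp] at h
          linarith
      have : Vs r k ≤ Real.log (1 + k) := by
        simp only [hVs]
        rw [sub_le_iff_le_add, ← Real.log_mul (by positivity) (by positivity)]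
        apply Real.log_le_log (by positivity)
        have : (0:ℝ) ≤ k := Nat.cast_nonneg k
        have : (0:ℝ) ≤ r := Nat.cast_nonneg r
        nlinarith
      simp only [he]; linarith
    have := Finset.sum_le_sum this
    simpa using this
  have S1 : S 1 ≤ 0 := log_over N (S 1) fun k => (convex_zero S S0 Sconv k).trans (Sle k)
  have E1 : E r 1 ≤ 0 := by
    have : E r 1 ≤ S 1 := Finset.single_le_sum (f := fun r => E r 1)
      (fun r _ => le_max_right _ _) (Finset.mem_range.mpr hrN)
    linarith
  have e1 : e r 1 ≤ 0 := (le_max_left _ _).trans E1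
  have : Real.log (1 + 1 / (r + 1)) = Vs r 1 := by
    simp only [hVs]
    rw [← Real.log_div (by positivity) (by positivity)]
    congr 1
    push_cast
    field_simp
  rw [this]
  simp only [he, hV] at e1
  simp only [hL] at e1
  linarith

end TNP

namespace TNP
open Matrix

lemma jacobi22 {m n : Type*} [Fintype m] [Fintype n] [DecidableEq m] [DecidableEq n]
    (M : Matrix (m ⊕ n) (m ⊕ n) ℝ) :
    M.det * (M.adjugate.toBlocks₂₂).det = M.toBlocks₁₁.det * M.det ^ Fintype.card n := by
  have h := Matrix.mul_adjugate M
  set A := M.adjugate with hA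
  have key : M * fromBlocks 1 A.toBlocks₁₂ 0 A.toBlocks₂₂ =
      fromBlocks M.toBlocks₁₁ 0 M.toBlocks₂₁ (M.det • 1) := by
    have h1 : M * A = fromBlocks (M.det • 1) 0 0 (M.det • 1) := by
      rw [h]; ext i j; rcases i with i | i <;> rcases j with j | j <;> simp [Matrix.one_apply]
    rw [← fromBlocks_toBlocks M, ← fromBlocks_toBlocks A, fromBlocks_multiply] at h1
    obtain ⟨_, h12, _, h22⟩ := fromBlocks_inj.mp h1
    conv_lhs => rw [← fromBlocks_toBlocks M]
    rw [fromBlocks_multiply]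
    rw [h12, h22, fromBlocks_toBlocks M]
    simp
  have := congrArg Matrix.det key
  rw [det_mul, det_fromBlocks_zero₂₁, det_fromBlocks_zero₁₂, det_one, one_mul] at this
  rw [this]
  simp

/-- center, then the two ends -/
def ends (k : ℕ) : Fin k ⊕ Fin 2 → Fin (k + 2) :=
  Sum.elim (fun i => i.castSucc.succ) ![0, Fin.last (k + 1)]

lemma ends_bij (k : ℕ) : Function.Bijective (ends k) := by
  rw [Fintype.bijective_iff_injective_and_card]
  constructor
  · rintro (i | i) (j | j) h
    · simp [ends] at h; rw [h]
    · exfalso; fin_cases j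
      · simp [ends, Fin.ext_iff] at h
      · simp [ends, Fin.ext_iff] at h; omega
    · exfalso; fin_cases i
      · simp [ends, Fin.ext_iff] at h
      · simp [ends, Fin.ext_iff] at h; omega
    · fin_cases i <;> fin_cases j <;> simp [ends, Fin.ext_iff] at h ⊢
  · simp

lemma desnanot {k : ℕ} (M : Matrix (Fin (k + 2)) (Fin (k + 2)) ℝ) (h : M.det ≠ 0) :
    (M.submatrix Fin.succ Fin.succ).det * (M.submatrix Fin.castSucc Fin.castSucc).det =
    M.det * (M.submatrix (fun i : Fin k => i.castSucc.succ) (fun i : Fin k => i.castSucc.succ)).det +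
    (M.submatrix Fin.succ Fin.castSucc).det * (M.submatrix Fin.castSucc Fin.succ).det := by
  let e : Fin k ⊕ Fin 2 ≃ Fin (k + 2) := Equiv.ofBijective _ (ends_bij k)
  have J := jacobi22 (M.submatrix e e)
  rw [det_submatrix_equiv_self, adjugate_submatrix_equiv_self] at J
  have c : (M.submatrix e e).toBlocks₁₁ =
      M.submatrix (fun i : Fin k => i.castSucc.succ) (fun i : Fin k => i.castSucc.succ) := by
    ext i j; rfl
  have d00 : M.adjugate 0 0 = (M.submatrix Fin.succ Fin.succ).det := by
    rw [adjugate_fin_succ_eq_det_submatrix]; simp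
  have dll : M.adjugate (Fin.last _) (Fin.last _) =
      (M.submatrix Fin.castSucc Fin.castSucc).det := by
    rw [adjugate_fin_succ_eq_det_submatrix]
    simp only [Fin.succAbove_last]
    rw [Even.neg_one_pow ⟨_, rfl⟩, one_mul]
  have d0l : M.adjugate 0 (Fin.last _) * M.adjugate (Fin.last _) 0 =
      (M.submatrix Fin.succ Fin.castSucc).det * (M.submatrix Fin.castSucc Fin.succ).det := by
    rw [adjugate_fin_succ_eq_det_submatrix, adjugate_fin_succ_eq_det_submatrix]
    simp only [Fin.succAbove_last]
    have : ((0 : Fin (k + 2)).succAbove) = Fin.succ := by ext; simp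
    rw [this]
    have h2 : ((-1 : ℝ) ^ (((Fin.last (k + 1) : Fin (k + 2)) : ℕ) + ((0 : Fin (k + 2)) : ℕ))) *
      ((-1 : ℝ) ^ (((0 : Fin (k + 2)) : ℕ) + ((Fin.last (k + 1) : Fin (k + 2)) : ℕ))) = 1 := by
      rw [← pow_add]; apply Even.neg_one_pow; exact ⟨k + 1, by simp⟩
    linear_combination ((M.submatrix Fin.succ Fin.castSucc).det * (M.submatrix Fin.castSucc Fin.succ).det) * h2
  rw [c, det_fin_two] at J
  have e0 : e (Sum.inr 0) = 0 := rfl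
  have e1 : e (Sum.inr 1) = Fin.last _ := rfl
  simp only [toBlocks₂₂, of_apply, submatrix_apply, e0, e1] at J
  rw [d00, dll, d0l] at J
  simp only [Fintype.card_fin] at J
  have := mul_left_cancel₀ h (J.trans (by ring : _ = M.det * (M.det * (M.submatrix (fun i : Fin k => i.castSucc.succ) (fun i : Fin k => i.castSucc.succ)).det)))
  linarith

lemma border {k : ℕ} (M : Matrix (Fin (k + 2)) (Fin (k + 2)) ℝ)
    (hc : ∀ i : Fin k, M i.castSucc.castSucc (Fin.last _) = 0)
    (hr : ∀ j : Fin k, M (Fin.last _) j.castSucc.castSucc = 0) :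
    M.det = M (Fin.last _) (Fin.last _) * (M.submatrix Fin.castSucc Fin.castSucc).det -
      M (Fin.last k).castSucc (Fin.last _) * M (Fin.last _) (Fin.last k).castSucc *
        (M.submatrix (fun i : Fin k => i.castSucc.castSucc)
          (fun i : Fin k => i.castSucc.castSucc)).det := by
  rw [det_succ_column M (Fin.last _), Fin.sum_univ_castSucc, Fin.sum_univ_castSucc]
  simp only [hc, mul_zero, zero_mul, Finset.sum_const_zero, zero_add, Fin.succAbove_last]
  rw [det_succ_row (M.submatrix (Fin.last k).castSucc.succAbove Fin.castSucc) (Fin.last _),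
    Fin.sum_univ_castSucc]
  have l : (Fin.last k).castSucc.succAbove (Fin.last k) = Fin.last (k + 1) := by
    rw [Fin.succAbove_castSucc_self]; rfl
  simp only [submatrix_apply, l, hr, mul_zero, zero_mul, Finset.sum_const_zero, zero_add,
    Fin.succAbove_last, submatrix_submatrix]
  have c : ((Fin.last k).castSucc.succAbove ∘ Fin.castSucc) = fun i : Fin k => i.castSucc.castSucc := by
    ext i
    simp [Fin.succAbove, Fin.lt_def]
  rw [c]
  simp only [Fin.val_castSucc, Fin.val_last]
  have s1 : ((-1 : ℝ) ^ (k + (k + 1))) = -1 := Odd.neg_one_pow ⟨k, by ring⟩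
  have s2 : ((-1 : ℝ) ^ (k + k)) = 1 := Even.neg_one_pow ⟨k, rfl⟩
  have s3 : ((-1 : ℝ) ^ (k + 1 + (k + 1))) = 1 := Even.neg_one_pow ⟨k + 1, rfl⟩
  rw [s1, s2, s3]
  simp only [Function.comp_def]
  ring

end TNP

namespace TNP
open Matrix

noncomputable def TT (a : ℤ → ℝ) (r K : ℕ) : ℝ :=
  (Matrix.of fun i j : Fin K => a ((r : ℤ) + (i : ℤ) - (j : ℤ))).det

lemma TT_low {a : ℤ → ℝ} (hneg : ∀ k, k < 0 → a k = 0) (K : ℕ) : TT a 0 K = a 0 ^ K := by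
  unfold TT
  rw [det_of_isLowerTriangular]
  · simp
  · intro i j hij
    simp only [of_apply]
    apply hneg
    have : (i : ℕ) < j := hij
    push_cast; omega

lemma TT_high {a : ℤ → ℝ} {n : ℕ} (hbig : ∀ k, (n : ℤ) < k → a k = 0) (K : ℕ) :
    TT a n K = a n ^ K := by
  unfold TT
  rw [det_of_isUpperTriangular]
  · simp
  · intro i j hij
    simp only [of_apply]
    apply hbig
    have : (j : ℕ) < i := hij
    omega

lemma TT_pos {a : ℤ → ℝ} {n : ℕ} (hTN : IsTNKernel fun x y : ℤ => a (x - y))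
    (hp : ∀ k : ℤ, 0 ≤ k → k ≤ n → 0 < a k)
    (hneg : ∀ k, k < 0 → a k = 0) (hbig : ∀ k, (n : ℤ) < k → a k = 0) (r : ℕ) (hr : r ≤ n) (K : ℕ) :
    0 < TT a r K := by
  rcases Nat.eq_zero_or_pos r with rfl | hr0
  · rw [TT_low hneg]; exact pow_pos (hp 0 le_rfl (by omega)) _
  rcases hr.eq_or_lt with rfl | hrn
  · rw [TT_high hbig]; exact pow_pos (hp _ (by omega) le_rfl) _
  induction K with
  | zero => simp [TT]
  | succ k ih =>
    have hnn : 0 ≤ TT a r (k + 1) := by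
      refine hTN (k + 1) (fun i => (r : ℤ) + i) (fun j => (j : ℤ)) ?_ ?_
      · intro i j h; have : (i : ℕ) < j := h; simp only; omega
      · intro i j h; have : (i : ℕ) < j := h; simp only; omega
    rcases hnn.lt_or_eq with h | h
    · exact h
    exfalso
    let x : Fin (k + 2) → ℤ := fun i => if (i : ℕ) ≤ k then (r : ℤ) + i else n + k
    let y : Fin (k + 2) → ℤ := fun i => if (i : ℕ) ≤ k then (i : ℤ) else r + k
    have hx : StrictMono x := by
      intro i j h; have : (i : ℕ) < j := h; simp only [x]; split_ifs <;> omega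
    have hy : StrictMono y := by
      intro i j h; have : (i : ℕ) < j := h; simp only [y]; split_ifs <;> omega
    have hM := hTN (k + 2) x y hx hy
    rw [border] at hM
    · have e1 : ((Matrix.of fun i j => a (x i - y j)).submatrix Fin.castSucc Fin.castSucc).det =
          TT a r (k + 1) := by
        unfold TT
        congr 1
        ext i j
        have hi : (i : ℕ) ≤ k := by omega
        have hj : (j : ℕ) ≤ k := by omega
        simp [x, y, hi, hj]
      have e2 : ((Matrix.of fun i j => a (x i - y j)).submatrix
          (fun i : Fin k => i.castSucc.castSucc) (fun i : Fin k => i.castSucc.castSucc)).det =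
          TT a r k := by
        unfold TT
        congr 1
        ext i j
        have hi : (i : ℕ) ≤ k := by omega
        have hj : (j : ℕ) ≤ k := by omega
        simp [x, y, hi, hj]
      rw [e1, e2, ← h] at hM
      have e3 : x (Fin.last k).castSucc - y (Fin.last (k + 1)) = 0 := by simp [x, y]
      have e4 : x (Fin.last (k + 1)) - y (Fin.last k).castSucc = n := by simp [x, y]
      simp only [of_apply, e3, e4, mul_zero, zero_sub] at hM
      have := mul_pos (mul_pos (hp 0 le_rfl (by omega)) (hp n (by omega) le_rfl)) ih
      linarith
    · intro i
      simp only [of_apply, x, y]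
      apply hneg
      have := i.2
      simp
    · intro i
      simp only [of_apply, x, y]
      apply hbig
      have := i.2
      simp
      omega

lemma seq_main {a : ℤ → ℝ} {N : ℕ} (hTN : IsTNKernel fun x y : ℤ => a (x - y))
    (hp : ∀ k : ℤ, 0 ≤ k → k ≤ ((N + 1 : ℕ) : ℤ) → 0 < a k)
    (hneg : ∀ k, k < 0 → a k = 0) (hbig : ∀ k, ((N + 1 : ℕ) : ℤ) < k → a k = 0)
    (r : ℕ) (hr : r < N) :
    Real.log (1 + 1 / (r + 1)) ≤
      2 * Real.log (a (r + 1)) - Real.log (a r) - Real.log (a (r + 2)) := by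
  have hpos := TT_pos hTN hp hneg hbig
  have := toda_scalar N (TT a) (a 0) (a (N + 1 : ℕ)) (fun r k h => hpos r h k)
    (fun r _ => by simp [TT]) (TT_low hneg) (TT_high hbig) ?_ r hr
  · simpa [TT] using this
  intro r k hr
  have h := (hpos (r + 1) (by omega) (k + 2)).ne'
  unfold TT at h
  have D := desnanot _ h
  have c1 : ((Matrix.of fun i j : Fin (k + 2) => a (((r + 1 : ℕ) : ℤ) + (i : ℤ) - (j : ℤ))).submatrix
      Fin.succ Fin.succ).det = TT a (r + 1) (k + 1) := by
    unfold TT; congr 1; ext i j; simp only [submatrix_apply, of_apply, Fin.val_succ]; congr 1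
    push_cast; ring
  have c2 : ((Matrix.of fun i j : Fin (k + 2) => a (((r + 1 : ℕ) : ℤ) + (i : ℤ) - (j : ℤ))).submatrix
      Fin.castSucc Fin.castSucc).det = TT a (r + 1) (k + 1) := by
    unfold TT; congr 1
  have c3 : ((Matrix.of fun i j : Fin (k + 2) => a (((r + 1 : ℕ) : ℤ) + (i : ℤ) - (j : ℤ))).submatrix
      (fun i : Fin k => i.castSucc.succ) (fun i : Fin k => i.castSucc.succ)).det =
      TT a (r + 1) k := by
    unfold TT; congr 1; ext i j
    simp only [submatrix_apply, of_apply, Fin.val_succ, Fin.val_castSucc]; congr 1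
    push_cast; ring
  have c4 : ((Matrix.of fun i j : Fin (k + 2) => a (((r + 1 : ℕ) : ℤ) + (i : ℤ) - (j : ℤ))).submatrix
      Fin.succ Fin.castSucc).det = TT a (r + 2) (k + 1) := by
    unfold TT; congr 1; ext i j
    simp only [submatrix_apply, of_apply, Fin.val_succ, Fin.val_castSucc]; congr 1
    push_cast; ring
  have c5 : ((Matrix.of fun i j : Fin (k + 2) => a (((r + 1 : ℕ) : ℤ) + (i : ℤ) - (j : ℤ))).submatrix
      Fin.castSucc Fin.succ).det = TT a r (k + 1) := by
    unfold TT; congr 1; ext i j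
    simp only [submatrix_apply, of_apply, Fin.val_succ, Fin.val_castSucc]; congr 1
    push_cast; ring
  rw [c1, c2, c3, c4, c5] at D
  rw [sq]
  exact D

end TNP

namespace TNP
open Matrix

lemma quad {g : ℕ → ℝ} {δ : ℝ} {M : ℕ}
    (h : ∀ k, k + 2 ≤ 2 * M → δ ≤ 2 * g (k + 1) - g k - g (k + 2)) :
    M ^ 2 * δ ≤ 2 * g M - g 0 - g (2 * M) := by
  set u : ℕ → ℝ := fun k => g k + δ * k ^ 2 / 2 with hu
  have hc : ∀ k, k + 2 ≤ 2 * M → u (k + 2) - u (k + 1) ≤ u (k + 1) - u k := by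
    intro k hk
    have := h k hk
    simp only [hu]; push_cast; nlinarith
  have hd : ∀ m j, m + j + 1 ≤ 2 * M → u (m + j + 1) - u (m + j) ≤ u (j + 1) - u j := by
    intro m j
    induction m with
    | zero => intro _; simp
    | succ m ih =>
      intro hm
      have h1 := ih (by omega)
      have h2 := hc (m + j) (by omega)
      have : m + 1 + j = m + j + 1 := by ring
      rw [this]
      linarith
  have h3 : ∀ j, j ≤ M → u (M + j) - u j ≤ u M - u 0 := by
    intro j
    induction j with
    | zero => intro _; simp
    | succ j ih =>
      intro hj
      have h1 := ih (by omega)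
      have h2 := hd M j (by omega)
      rw [← add_assoc]
      linarith
  have := h3 M le_rfl
  rw [← two_mul] at this
  simp only [hu] at this
  push_cast at this
  nlinarith

lemma seq_gap {b : ℤ → ℝ} (hTN : IsTNKernel fun x y : ℤ => b (x - y)) (lo hi : ℤ)
    (hp : ∀ k, lo ≤ k → k ≤ hi → 0 < b k) (hneg : ∀ k, k < lo → b k = 0)
    (hbig : ∀ k, hi < k → b k = 0) (j : ℤ) (h1 : lo ≤ j) (h2 : j + 2 ≤ hi) :
    1 / ((hi - lo : ℤ) : ℝ) ≤ 2 * Real.log (b (j + 1)) - Real.log (b j) - Real.log (b (j + 2)) := by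
  obtain ⟨N, hN⟩ : ∃ N : ℕ, hi - lo = ((N + 1 : ℕ) : ℤ) := ⟨(hi - lo - 1).toNat, by omega⟩
  obtain ⟨r, hr⟩ : ∃ r : ℕ, j - lo = r := ⟨(j - lo).toNat, by omega⟩
  have := seq_main (a := fun k => b (k + lo)) (N := N) (by
    intro n x y hx hy
    have := hTN n (fun i => x i + lo) y (fun i j h => by have := hx h; simp only; omega) hy
    have e : ∀ i j, x i + lo - y j = x i - y j + lo := fun i j => by ring
    simpa only [e] using this) (fun k h h' => hp _ (by omega) (by omega)) (fun k h => hneg _ (by omega))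
    (fun k h => hbig _ (by omega)) r (by omega)
  have e0 : (r : ℤ) + lo = j := by omega
  have e1 : (r : ℤ) + 1 + lo = j + 1 := by omega
  have e2 : (r : ℤ) + 2 + lo = j + 2 := by omega
  rw [e0, e1, e2] at this
  refine le_trans ?_ this
  rw [hN]
  have hrN : (r : ℝ) + 1 ≤ N := by
    have : r + 1 ≤ N := by omega
    exact_mod_cast this
  have hl := Real.one_sub_inv_le_log_of_pos (x := 1 + 1 / ((r : ℝ) + 1)) (by positivity)
  refine le_trans ?_ hl
  have : 1 - (1 + 1 / ((r : ℝ) + 1))⁻¹ = 1 / ((r : ℝ) + 2) := by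
    field_simp; ring
  rw [this]
  push_cast
  apply one_div_le_one_div_of_le (by positivity)
  linarith

theorem no_compact {f : ℝ → ℝ} (hf : IsTNKernel fun x y : ℝ => f (x - y)) {R p q : ℝ}
    (hR : ∀ x, 0 < f x → |x| ≤ R) (hpq : p < q) (hp : 0 < f p) (hq : 0 < f q) : False := by
  have hRpos : 0 < R := by
    by_contra h
    push Not at h
    have h1 := hR p hp
    have h2 := hR q hq
    have := abs_nonpos_iff.mp (h1.trans h)
    have := abs_nonpos_iff.mp (h2.trans h)
    linarith
  set m : ℝ := (p + q) / 2 with hm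
  set C : ℝ := 2 * Real.log (f m) - Real.log (f p) - Real.log (f q) with hC
  have key : ∀ M : ℕ, 1 ≤ M → M * ((q - p) / (4 * R)) ≤ C := by
    intro M hM
    have hM' : (1 : ℝ) ≤ M := by exact_mod_cast hM
    set h : ℝ := (q - p) / (2 * M) with hh
    have hpos : 0 < h := by
      apply div_pos <;> linarith
    set b : ℤ → ℝ := fun k => f (p + k * h) with hb
    have bnn : ∀ k, 0 ≤ b k := fun k => tn_nonneg hf _
    have hbTN : IsTNKernel fun x y : ℤ => b (x - y) := by
      intro n x y hx hy
      have := hf n (fun i => p + x i * h) (fun i => y i * h)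
        (fun i j hij => by
          have : (x i : ℝ) < x j := by exact_mod_cast hx hij
          simp only; nlinarith)
        (fun i j hij => by
          have : (y i : ℝ) < y j := by exact_mod_cast hy hij
          simp only; nlinarith)
      have e : ∀ i j, f (p + x i * h - y j * h) = b (x i - y j) := fun i j => by
        simp only [hb]; congr 1; push_cast; ring
      simpa only [e] using this
    have b0 : 0 < b 0 := by simpa [hb] using hp
    have hq' : p + (2 * M : ℝ) * h = q := by rw [hh]; field_simp; ring
    have bM : 0 < b (2 * M) := by
      simp only [hb]; push_cast; rw [hq']; exact hq
    have bd : ∀ k, 0 < b k → |p + k * h| ≤ R := fun k hk => hR _ hk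
    have up : ∃ B : ℤ, ∀ k, 0 < b k → k ≤ B := by
      refine ⟨⌈(R - p) / h⌉, fun k hk => ?_⟩
      have := (abs_le.mp (bd k hk)).2
      have h1 : (k : ℝ) ≤ (R - p) / h := by rw [le_div_iff₀ hpos]; linarith
      exact_mod_cast h1.trans (Int.le_ceil _)
    have dn : ∃ B : ℤ, ∀ k, 0 < b k → B ≤ k := by
      refine ⟨⌊(-R - p) / h⌋, fun k hk => ?_⟩
      have := (abs_le.mp (bd k hk)).1
      have h1 : (-R - p) / h ≤ (k : ℝ) := by rw [div_le_iff₀ hpos]; linarith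
      exact_mod_cast (Int.floor_le _).trans h1
    obtain ⟨lo, hlo, hlo'⟩ := Int.exists_least_of_bdd dn ⟨0, b0⟩
    obtain ⟨hi, hhi, hhi'⟩ := Int.exists_greatest_of_bdd up ⟨0, b0⟩
    have gap := seq_gap hbTN lo hi (by
      intro k h1 h2
      have h1' : (lo : ℝ) ≤ k := by exact_mod_cast h1
      have h2' : (k : ℝ) ≤ hi := by exact_mod_cast h2
      exact tn_supp hf hlo hhi (by nlinarith) (by nlinarith))
      (by
        intro k hk
        by_contra hne
        have := hlo' k (lt_of_le_of_ne (bnn k) (Ne.symm hne))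
        omega)
      (by
        intro k hk
        by_contra hne
        have := hhi' k (lt_of_le_of_ne (bnn k) (Ne.symm hne))
        omega)
    have l0 := hlo' 0 b0
    have l1 := hhi' _ bM
    have Q := quad (g := fun k : ℕ => Real.log (b k)) (M := M) (δ := 1 / ((hi - lo : ℤ) : ℝ)) (by
      intro k hk
      have := gap k (by omega) (by omega)
      push_cast at this ⊢
      exact this)
    have eM : b ((M : ℕ) : ℤ) = f m := by
      simp only [hb]; congr 1; push_cast; rw [hm, hh]; field_simp; ring
    have e0 : b ((0 : ℕ) : ℤ) = f p := by simp [hb]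
    have e2 : b ((2 * M : ℕ) : ℤ) = f q := by simp only [hb]; push_cast; rw [hq']
    rw [eM, e0, e2] at Q
    refine le_trans ?_ Q
    have hw : ((hi - lo : ℤ) : ℝ) * h ≤ 2 * R := by
      have h1 := (abs_le.mp (bd _ hhi)).2
      have h2 := (abs_le.mp (bd _ hlo)).1
      push_cast; linarith
    have hw0 : 0 < ((hi - lo : ℤ) : ℝ) := by
      have : 0 < hi - lo := by omega
      exact_mod_cast this
    rw [hh, mul_div_assoc', div_le_iff₀ (by positivity)] at hw
    rw [mul_one_div, mul_div_assoc', div_le_div_iff₀ (by positivity) hw0]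
    nlinarith
  obtain ⟨M, hM⟩ := exists_nat_gt (C / ((q - p) / (4 * R)))
  have hpos : 0 < (q - p) / (4 * R) := by apply div_pos <;> linarith
  have h1 := key (M + 1) (by omega)
  rw [div_lt_iff₀ hpos] at hM
  push_cast at h1
  nlinarith

end TNP

namespace TNP
open MeasureTheory

lemma pf_measurable {Λ : ℝ → ℝ} (h : IsPolyaFrequencyFunction Λ) : Measurable Λ := by
  obtain ⟨hi, hnn, _, hK⟩ := h
  set Ψ : ℝ → ℝ := fun x => ∫ t in Set.Ioi 0, Λ (x + t) with hΨ
  have hint : ∀ x, Integrable fun t => Λ (x + t) := fun x => hi.comp_add_left x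
  have Ψnn : ∀ x, 0 ≤ Ψ x := fun x => integral_nonneg fun t => hnn _
  have Ψpos : ∀ x y, x < y → 0 < Λ x → 0 < Λ y → 0 < Ψ x := by
    intro x y hxy hx hy
    rw [hΨ]
    simp only
    rw [setIntegral_pos_iff_support_of_nonneg_ae
      (Filter.Eventually.of_forall fun t => hnn _) (hint x).integrableOn]
    refine lt_of_lt_of_le ?_ (measure_mono (s := Set.Ioo 0 (y - x)) ?_)
    · simp [hxy]
    · intro t ht
      refine ⟨?_, ht.1⟩
      exact (tn_supp hK hx hy (v := x + t) (by linarith [ht.1]) (by linarith [ht.2])).ne'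
  have cross : ∀ x y, x < y → Λ x * Ψ y ≤ Λ y * Ψ x := by
    intro x y hxy
    simp only [hΨ]
    rw [← integral_const_mul, ← integral_const_mul]
    refine setIntegral_mono_on ((hint y).const_mul _).integrableOn ((hint x).const_mul _).integrableOn
      measurableSet_Ioi ?_
    intro t ht
    exact tn2 hK hxy (by have : 0 < t := ht; linarith) (by ring)
  have Ψanti : Antitone Ψ := by
    have e : ∀ x, Ψ x = ∫ t in Set.Ioi x, Λ t := by
      intro x
      simp only [hΨ]
      have := (measurePreserving_add_left volume x).setIntegral_preimage_emb
        (measurableEmbedding_addLeft x) Λ (Set.Ioi x)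
      simpa using this
    intro x y hxy
    rw [e, e]
    exact setIntegral_mono_set hi.integrableOn (Filter.Eventually.of_forall hnn)
      (LE.le.eventuallyLE (Set.Ioi_subset_Ioi hxy))
  set φ : ℝ → EReal := fun x => if 0 < Ψ x then ((Λ x / Ψ x : ℝ) : EReal) else ⊤ with hφ
  have φmono : Monotone φ := by
    intro x y hxy
    simp only [hφ]
    rcases hxy.eq_or_lt with rfl | hxy
    · exact le_rfl
    by_cases hy : 0 < Ψ y
    · have hx : 0 < Ψ x := lt_of_lt_of_le hy (Ψanti hxy.le)
      rw [if_pos hx, if_pos hy]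
      have := cross x y hxy
      exact_mod_cast (div_le_div_iff₀ hx hy).mpr this
    · rw [if_neg hy]; exact le_top
  have gm : Measurable fun x => (φ x).toReal * Ψ x :=
    φmono.measurable.ereal_toReal.mul Ψanti.measurable
  refine gm.measurable_of_countable_ne (Set.Subsingleton.countable ?_)
  have z : ∀ x, (φ x).toReal * Ψ x ≠ Λ x → Ψ x = 0 ∧ 0 < Λ x := by
    intro x hx
    by_cases h : 0 < Ψ x
    · exfalso; apply hx
      simp only [hφ]; rw [if_pos h, EReal.toReal_coe]
      field_simp
    · have h0 : Ψ x = 0 := le_antisymm (not_lt.mp h) (Ψnn x)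
      rw [h0, mul_zero] at hx
      exact ⟨h0, lt_of_le_of_ne (hnn x) hx⟩
  intro x hx y hy
  obtain ⟨a1, a2⟩ := z x hx
  obtain ⟨b1, b2⟩ := z y hy
  rcases lt_trichotomy x y with h | h | h
  · have := Ψpos x y h a2 b2; linarith
  · exact h
  · have := Ψpos y x h b2 a2; linarith

lemma pf_tn {Λ : ℝ → ℝ} (h : IsPolyaFrequencyFunction Λ) : IsTNFun Λ :=
  ⟨pf_measurable h, h.2.2.2⟩

lemma supp_cases {f : ℝ → ℝ} (hf : IsTNKernel fun x y : ℝ => f (x - y))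
    (h2 : ∃ a b : ℝ, a ≠ b ∧ f a ≠ 0 ∧ f b ≠ 0) :
    IsUpperSet {x | 0 < f x} ∨ IsLowerSet {x | 0 < f x} := by
  have hnn := tn_nonneg hf
  have hpos : ∀ x, f x ≠ 0 → 0 < f x := fun x h => lt_of_le_of_ne (hnn x) (Ne.symm h)
  by_cases hb : ∀ B, ∃ x, 0 < f x ∧ B < x
  · left
    intro x y hxy hx
    obtain ⟨w, hw, hw'⟩ := hb y
    exact tn_supp hf hx hw hxy hw'.le
  · right
    push Not at hb
    obtain ⟨B, hB⟩ := hb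
    have hb' : ∀ A, ∃ x, 0 < f x ∧ x < A := by
      intro A
      by_contra hA
      push Not at hA
      have hR : ∀ x, 0 < f x → |x| ≤ |A| + |B| := by
        intro x hx
        have h1 := hA x hx
        have h2 := hB x hx
        rw [abs_le]
        have := neg_abs_le A
        have := le_abs_self B
        have := abs_nonneg A
        have := abs_nonneg B
        constructor <;> linarith
      obtain ⟨a, b, hab, ha, hb⟩ := h2
      rcases lt_or_gt_of_ne hab with h | h
      · exact no_compact hf hR h (hpos _ ha) (hpos _ hb)
      · exact no_compact hf hR h (hpos _ hb) (hpos _ ha)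
    intro x y hxy hx
    obtain ⟨w, hw, hw'⟩ := hb' y
    exact tn_supp hf hw hx hw'.le hxy

open Classical in
lemma tn_ind {A : Set ℝ} (h : IsUpperSet A ∨ IsLowerSet A) (hm : MeasurableSet A) {c : ℝ}
    (hc : 0 ≤ c) : IsTNFun fun x => if x ∈ A then c else 0 := by
  refine ⟨Measurable.ite hm measurable_const measurable_const, ?_⟩
  have : IsTNKernel fun x y : ℝ => if x - y ∈ A then (1:ℝ) else 0 := by
    rcases h with h | h
    · exact tn_upper A h
    · exact tn_lower A h
  have := tn_smul this hc
  simpa using this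

lemma three_one {F : ℝ → ℝ} {c : ℝ} (hc : 0 < c)
    (h : (∀ x : ℝ, 0 ≤ x → F x = c) ∨
          (∀ x : ℝ, 0 ≤ x → F x = c * x) ∨
          (∀ x : ℝ, 0 ≤ x → F x = if 0 < x then c else 0) ∨
          (∀ x : ℝ, 0 ≤ x → F x = if x = 0 then c else 0)) {f : ℝ → ℝ} (hf : IsTNFun f)
    (h2 : ∃ a b : ℝ, a ≠ b ∧ f a ≠ 0 ∧ f b ≠ 0) : IsTNFun (F ∘ f) := by
  classical
  obtain ⟨hm, hK⟩ := hf
  have hnn := tn_nonneg hK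
  have hS := supp_cases hK h2
  have mS : MeasurableSet {x | 0 < f x} := measurableSet_lt measurable_const hm
  rcases h with h | h | h | h
  · have : F ∘ f = fun _ => c := by ext x; exact h _ (hnn x)
    rw [this]
    exact ⟨measurable_const, tn_const hc.le⟩
  · have : F ∘ f = fun x => c * f x := by ext x; exact h _ (hnn x)
    rw [this]
    exact ⟨hm.const_mul c, tn_smul hK hc.le⟩
  · have : F ∘ f = fun x => if x ∈ {x | 0 < f x} then c else 0 := by
      ext x; simpa using h _ (hnn x)
    rw [this]
    exact tn_ind hS mS hc.le
  · have : F ∘ f = fun x => if x ∈ {x | 0 < f x}ᶜ then c else 0 := by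
      ext x
      have e : x ∈ {x | 0 < f x}ᶜ ↔ f x = 0 := by
        simp only [Set.mem_compl_iff, Set.mem_ofPred_eq, not_lt]
        exact ⟨fun h => le_antisymm h (hnn x), fun h => h.le⟩
      simp only [e]
      exact h _ (hnn x)
    rw [this]
    have key : IsUpperSet {x | 0 < f x}ᶜ ∨ IsLowerSet {x | 0 < f x}ᶜ := by
      rcases hS with h | h
      · right; exact h.compl
      · left; exact h.compl
    convert tn_ind key mS.compl hc.le

lemma more_back {F : ℝ → ℝ} {c : ℝ} (hc : 0 < c)
    (h : (∀ x : ℝ, 0 ≤ x → F x = c) ∨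
          (∀ x : ℝ, 0 ≤ x → F x = c * x) ∨
          (∀ x : ℝ, 0 ≤ x → F x = if 0 < x then c else 0)) {f : ℝ → ℝ} (hf : IsTNFun f) :
    IsTNFun (F ∘ f) := by
  by_cases h2 : ∃ a b : ℝ, a ≠ b ∧ f a ≠ 0 ∧ f b ≠ 0
  · exact three_one hc (by tauto) hf h2
  obtain ⟨hm, hK⟩ := hf
  have hnn := tn_nonneg hK
  push Not at h2
  rcases h with h | h | h
  · have : F ∘ f = fun _ => c := by ext x; exact h _ (hnn x)
    rw [this]
    exact ⟨measurable_const, tn_const hc.le⟩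
  · have : F ∘ f = fun x => c * f x := by ext x; exact h _ (hnn x)
    rw [this]
    exact ⟨hm.const_mul c, tn_smul hK hc.le⟩
  · obtain ⟨d, hd, hd'⟩ : ∃ d : ℝ, 0 ≤ d ∧ ∀ x, F (f x) = d * f x := by
      by_cases h0 : ∃ p, f p ≠ 0
      · obtain ⟨p, hp⟩ := h0
        refine ⟨c / f p, div_nonneg hc.le (hnn p), fun x => ?_⟩
        rw [h _ (hnn x)]
        by_cases hx : x = p
        · subst hx
          rw [if_pos (lt_of_le_of_ne (hnn x) (Ne.symm hp))]
          field_simp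
        · have : f x = 0 := h2 p x (Ne.symm hx) hp
          simp [this]
      · push Not at h0
        refine ⟨0, le_rfl, fun x => ?_⟩
        rw [h _ (hnn x)]; simp [h0]
    have : F ∘ f = fun x => d * f x := by ext x; exact hd' x
    rw [this]
    exact ⟨hm.const_mul d, tn_smul hK hd⟩

lemma not_four {F : ℝ → ℝ} {c : ℝ} (hc : 0 < c)
    (h : ∀ x : ℝ, 0 ≤ x → F x = if x = 0 then c else 0)
    (hall : ∀ f : ℝ → ℝ, IsTNFun f → IsTNFun (F ∘ f)) : False := by
  have hd : IsTNFun fun x : ℝ => if x = 0 then (1:ℝ) else 0 :=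
    ⟨Measurable.ite (measurableSet_singleton 0) measurable_const measurable_const, tn_delta⟩
  have := (hall _ hd).2
  have h2 := tn2 this (u := -1) (v := 0) (v' := 0) (w := 1) (by norm_num) (by norm_num) (by norm_num)
  simp only [Function.comp] at h2
  norm_num at h2
  rw [h 0 le_rfl, h 1 zero_le_one] at h2
  norm_num at h2
  nlinarith

end TNP

namespace TNP
open MeasureTheory

lemma F_mono {F : ℝ → ℝ} (hF0 : ∀ x : ℝ, 0 ≤ x → 0 ≤ F x)
    (hF : ∀ Λ : ℝ → ℝ, IsPolyaFrequencyFunction Λ → IsTNFun (F ∘ Λ)) {s t : ℝ} (hs : 0 < s)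
    (hst : s ≤ t) : F s ≤ F t := by
  rcases hst.eq_or_lt with rfl | hst
  · exact le_rfl
  have ht : 0 < t := hs.trans hst
  have hK := (hF _ (pf_abs ht)).2
  have hd : 0 < Real.log (t / s) := Real.log_pos (by rwa [one_lt_div hs])
  have h2 := tn2 hK (u := -Real.log (t / s)) (v := 0) (v' := 0) (w := Real.log (t / s))
    (by linarith) (by linarith) (by ring)
  have e : t * Real.exp (-Real.log (t / s)) = s := by
    rw [Real.exp_neg, Real.exp_log (by positivity)]; field_simp
  simp only [Function.comp, abs_neg, abs_of_pos hd, e, abs_zero, neg_zero, Real.exp_zero, mul_one] at h2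
  by_contra hcon
  push Not at hcon
  have := hF0 t ht.le
  nlinarith

lemma F_dich {F : ℝ → ℝ} (hF0 : ∀ x : ℝ, 0 ≤ x → 0 ≤ F x)
    (hF : ∀ Λ : ℝ → ℝ, IsPolyaFrequencyFunction Λ → IsTNFun (F ∘ Λ)) {t0 τ : ℝ} (h0 : 0 < t0)
    (hτ : 0 < τ) (hp : 0 < F t0) : 0 < F τ := by
  by_contra hn
  have hz : F τ = 0 := le_antisymm (not_lt.mp hn) (hF0 τ hτ.le)
  have h2t : 0 < 2 * t0 := by linarith
  have hK := (hF _ (pf_abs h2t)).2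
  refine no_compact (f := F ∘ fun x => 2 * t0 * Real.exp (-|x|)) hK (R := |Real.log (τ / (2 * t0))|)
    (p := 0) (q := Real.log 2) ?_ (Real.log_pos (by norm_num)) ?_ ?_
  · intro x hx
    simp only [Function.comp] at hx
    by_contra hc
    push Not at hc
    have h1 : 2 * t0 * Real.exp (-|x|) ≤ τ := by
      have : -|x| ≤ Real.log (τ / (2 * t0)) := by
        have := neg_abs_le (Real.log (τ / (2 * t0))); linarith
      rw [Real.le_log_iff_exp_le (by positivity), le_div_iff₀ h2t] at this
      linarith
    have := F_mono hF0 hF (by positivity) h1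
    linarith
  · simp only [Function.comp, abs_zero, neg_zero, Real.exp_zero, mul_one]
    exact lt_of_lt_of_le hp (F_mono hF0 hF h0 (by linarith))
  · have : 2 * t0 * Real.exp (-Real.log 2) = t0 := by
      rw [Real.exp_neg, Real.exp_log (by norm_num)]; field_simp
    simp only [Function.comp, abs_of_pos (Real.log_pos one_lt_two), this]
    exact hp

lemma F_const {F : ℝ → ℝ} (hF : ∀ Λ : ℝ → ℝ, IsPolyaFrequencyFunction Λ → IsTNFun (F ∘ Λ))
    (h0 : 0 < F 0) (hp : ∀ x, 0 < x → 0 < F x) {c : ℝ} (hc : 0 < c) : F c = F 0 := by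
  have hK := (hF _ (pf_exp hc)).2
  set G := F ∘ fun x => c * os (fun t => Real.exp (-1 * t)) x with hG
  have gneg : ∀ x, x < 0 → G x = F 0 := by
    intro x hx
    simp [hG, os, not_le.mpr hx]
  have g0 : G 0 = F c := by simp [hG, os]
  have gpos : 0 < G 1 := by
    simp only [hG, os, Function.comp]; exact hp _ (by rw [if_pos zero_le_one]; positivity)
  have hle : F c ≤ F 0 := by
    have := tn2 hK (u := -2) (v := -1) (v' := -1) (w := 0) (by norm_num) (by norm_num) (by norm_num)
    rw [gneg (-2) (by norm_num), gneg (-1) (by norm_num), g0] at this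
    exact le_of_mul_le_mul_left this h0
  refine le_antisymm hle ?_
  by_contra hlt
  push Not at hlt
  have key : ∀ N : ℕ, G 1 ≤ (F c / F 0) ^ N * G 0 := by
    intro N
    rcases Nat.eq_zero_or_pos N with rfl | hN
    · have := tn2 hK (u := -1) (v := 0) (v' := 0) (w := 1) (by norm_num) (by norm_num) (by norm_num)
      rw [gneg (-1) (by norm_num), g0] at this
      rw [pow_zero, one_mul, g0]
      have := hp c hc
      nlinarith
    have hN' : (0:ℝ) < N := by exact_mod_cast hN
    have : ∀ k : ℕ, G (k / N) ≤ (F c / F 0) ^ k * G 0 := by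
      intro k
      induction k with
      | zero => simp
      | succ k ih =>
        have hk : (0:ℝ) ≤ k / N := by positivity
        have hN1 : (0:ℝ) < 1 / N := by positivity
        have := tn2 hK (u := -(1 / N)) (v := 0) (v' := k / N) (w := ((k + 1 : ℕ) : ℝ) / N)
          (by linarith) (by linarith) (by push_cast; ring)
        rw [gneg _ (by linarith), g0] at this
        have h1 : G (((k + 1 : ℕ) : ℝ) / N) ≤ F c / F 0 * G (k / N) := by
          rw [div_mul_eq_mul_div, le_div_iff₀ h0]; linarith
        refine h1.trans ?_
        rw [pow_succ', mul_assoc]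
        exact mul_le_mul_of_nonneg_left ih (div_nonneg (hp c hc).le h0.le)
    have := this N
    rwa [div_self hN'.ne'] at this
  have ht := tendsto_pow_atTop_nhds_zero_of_lt_one (r := F c / F 0)
    (div_nonneg (hp c hc).le h0.le) (by rwa [div_lt_one h0])
  have ht2 := ht.mul_const (G 0)
  rw [zero_mul] at ht2
  have := ge_of_tendsto' ht2 key
  linarith

section
variable {F : ℝ → ℝ} (hF : ∀ Λ : ℝ → ℝ, IsPolyaFrequencyFunction Λ → IsTNFun (F ∘ Λ))
  (h0 : F 0 = 0) (hp : ∀ x, 0 < x → 0 < F x) (hm : ∀ s t, 0 < s → s ≤ t → F s ≤ F t)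

include hF h0

lemma G_tn (s0 : ℝ) : IsTNKernel fun x y : ℝ => os (fun t => F (Real.exp (s0 - t))) (x - y) := by
  have hK := (hF _ (pf_exp (Real.exp_pos s0))).2
  convert hK using 3 with x y
  simp only [os, Function.comp]
  split_ifs
  · rw [← Real.exp_add]; ring_nf
  · rw [mul_zero, h0]

lemma H_lc {a b v v' : ℝ} (h1 : a < v) (h2 : a < v') (h3 : v < b) (h : v + v' = a + b) :
    F (Real.exp a) * F (Real.exp b) ≤ F (Real.exp v) * F (Real.exp v') := by
  have := tn2 (G_tn hF h0 b) (u := 0) (w := b - a) (v := b - v) (v' := b - v') (by linarith)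
    (by linarith) (by linarith)
  rw [os, os, os, os, if_pos le_rfl, if_pos (by linarith), if_pos (by linarith),
    if_pos (by linarith)] at this
  simp only [sub_sub_cancel, sub_zero] at this
  linarith

include hp hm

lemma H_rc (s : ℝ) : Filter.Tendsto (fun δ => F (Real.exp (s + δ))) (nhdsWithin 0 (Set.Ioi 0))
    (nhds (F (Real.exp s))) := by
  set H : ℝ → ℝ := fun s => F (Real.exp s) with hH
  have Hp : ∀ s, 0 < H s := fun s => hp _ (Real.exp_pos s)
  have Hm : Monotone H := fun a b hab => hm _ _ (Real.exp_pos a) (Real.exp_le_exp.mpr hab)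
  set Q := H s / H (s - 1) with hQ
  have Q1 : 1 ≤ Q := by rw [hQ, one_le_div (Hp _)]; exact Hm (by linarith)
  have key : ∀ N : ℕ, 1 ≤ N → H (s + 1 / N) ≤ H s * (1 + (Q - 1) / N) := by
    intro N hN
    have hN' : (0:ℝ) < N := by exact_mod_cast hN
    have hN1 : (0:ℝ) < 1 / N := by positivity
    set ρ := H (s + 1 / N) / H s with hρ
    have hρ0 : 0 < ρ := div_pos (Hp _) (Hp _)
    have st : ∀ k : ℕ, ρ ^ k * H (s - k / N) ≤ H s := by
      intro k
      induction k with
      | zero => simp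
      | succ k ih =>
        have hk : (0:ℝ) ≤ k / N := by positivity
        have e : s - ((k + 1 : ℕ) : ℝ) / N = s - k / N - 1 / N := by push_cast; ring
        have h1 : H (s - ((k + 1 : ℕ) : ℝ) / N) * H (s + 1 / N) ≤ H (s - k / N) * H s := by
          rw [e]
          exact H_lc hF h0 (by linarith) (by linarith) (by linarith) (by ring)
        have h2 : ρ * H (s - ((k + 1 : ℕ) : ℝ) / N) ≤ H (s - k / N) := by
          rw [hρ, div_mul_eq_mul_div, div_le_iff₀ (Hp _)]; linarith
        rw [pow_succ, mul_assoc]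
        exact (mul_le_mul_of_nonneg_left h2 (by positivity)).trans ih
    have h1 := st N
    rw [div_self hN'.ne', ← le_div_iff₀ (Hp _)] at h1
    have h2 := one_add_mul_le_pow (a := ρ - 1) (by linarith) N
    rw [add_sub_cancel] at h2
    have h3 : ρ ≤ 1 + (Q - 1) / N := by
      have : ρ - 1 ≤ (Q - 1) / N := by rw [le_div_iff₀ hN']; linarith
      linarith
    rw [hρ, div_le_iff₀ (Hp _)] at h3
    linarith
  rw [Metric.tendsto_nhdsWithin_nhds]
  intro ε hε
  obtain ⟨N, hN⟩ := exists_nat_gt (H s * (Q - 1) / ε)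
  have hNpos : (0:ℝ) < N + 1 := by positivity
  refine ⟨1 / ((N : ℝ) + 1), by positivity, ?_⟩
  intro δ hδ hd
  have hδ : 0 < δ := hδ
  rw [Real.dist_eq, sub_zero, abs_of_pos hδ] at hd
  have h1 := key (N + 1) (by omega)
  have h2 : H (s + δ) ≤ H (s + 1 / ((N + 1 : ℕ) : ℝ)) := Hm (by push_cast; linarith)
  have h3 : H s ≤ H (s + δ) := Hm (by linarith)
  rw [Real.dist_eq, abs_of_nonneg (sub_nonneg.mpr h3)]
  rw [div_lt_iff₀ hε] at hN
  have h4 : H s * ((Q - 1) / ((N + 1 : ℕ) : ℝ)) < ε := by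
    push_cast
    rw [mul_div_assoc', div_lt_iff₀ hNpos]
    linarith
  have : H (s + δ) - H s < ε := by nlinarith
  exact this

lemma H_mult {p q C : ℝ} (hqp : q < p) (hC : 0 < C) :
    F (Real.exp (p - C)) * F (Real.exp q) = F (Real.exp p) * F (Real.exp (q - C)) := by
  set H : ℝ → ℝ := fun s => F (Real.exp s) with hH
  have Hp : ∀ s, 0 < H s := fun s => hp _ (Real.exp_pos s)
  apply le_antisymm
  · have key : ∀ δ, 0 < δ → δ < 1 → 0 ≤ H (p + 1 - C) * (H p * H (q + δ) - H (p + δ) * H q)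
        - H (p + 1) * (H (p - C) * H (q + δ) - H (p + δ) * H (q - C)) := by
      intro δ hδ hδ1
      have := tn3_raw (G_tn hF h0 (p + 1)) (a := 0) (b := 1) (c := 1 + p - q) (d := -C) (e := 0)
        (g := δ) (by linarith) (by linarith) (by linarith) hδ
      simp only [os] at this
      rw [if_pos (c := (0:ℝ) ≤ 0 - -C) (by linarith), if_pos (c := (0:ℝ) ≤ 1 - 0) (by linarith),
        if_pos (c := (0:ℝ) ≤ 1 + p - q - δ) (by linarith), if_pos (c := (0:ℝ) ≤ 1 - δ) (by linarith),
        if_pos (c := (0:ℝ) ≤ 1 + p - q - 0) (by linarith), if_pos (c := (0:ℝ) ≤ 0 - 0) (by linarith),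
        if_pos (c := (0:ℝ) ≤ 1 - -C) (by linarith), if_pos (c := (0:ℝ) ≤ 1 + p - q - -C) (by linarith),
        if_neg (c := (0:ℝ) ≤ 0 - δ) (by linarith)] at this
      have r1 : p + 1 - (0 - -C) = p + 1 - C := by ring
      have r2 : p + 1 - (1 - 0) = p := by ring
      have r3 : p + 1 - (1 + p - q - δ) = q + δ := by ring
      have r4 : p + 1 - (1 - δ) = p + δ := by ring
      have r5 : p + 1 - (1 + p - q - 0) = q := by ring
      have r6 : p + 1 - (0 - 0) = p + 1 := by ring
      have r7 : p + 1 - (1 - -C) = p - C := by ring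
      have r8 : p + 1 - (1 + p - q - -C) = q - C := by ring
      rw [r1, r2, r3, r4, r5, r6, r7, r8] at this
      simp only [hH]
      linarith
    have rp := H_rc hF h0 hp hm p
    have rq := H_rc hF h0 hp hm q
    have lim : Filter.Tendsto (fun δ => H (p + 1 - C) * (H p * H (q + δ) - H (p + δ) * H q)
        - H (p + 1) * (H (p - C) * H (q + δ) - H (p + δ) * H (q - C))) (nhdsWithin 0 (Set.Ioi 0))
        (nhds (H (p + 1 - C) * (H p * H q - H p * H q)
        - H (p + 1) * (H (p - C) * H q - H p * H (q - C)))) :=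
      (((rq.const_mul _).sub (rp.mul_const _)).const_mul _).sub
        (((rq.const_mul _).sub (rp.mul_const _)).const_mul _)
    have := ge_of_tendsto lim (by
      filter_upwards [Ioo_mem_nhdsGT (zero_lt_one' ℝ)] with δ hδ
      exact key δ hδ.1 hδ.2)
    have h1 := Hp (p + 1)
    have h2 : 0 ≤ H (p + 1) * (H p * H (q - C) - H (p - C) * H q) := by linarith
    have h3 := nonneg_of_mul_nonneg_right h2 h1
    simp only [hH] at h3
    linarith
  · have := H_lc hF h0 (a := q - C) (b := p) (v := p - C) (v' := q) (by linarith) (by linarith)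
      (by linarith) (by ring)
    linarith

lemma F_pow : ∃ c α : ℝ, 0 < c ∧ 0 ≤ α ∧ ∀ x, 0 < x → F x = c * x ^ α := by
  set L : ℝ → ℝ := fun s => Real.log (F (Real.exp s)) with hL
  have Hp : ∀ s, 0 < F (Real.exp s) := fun s => hp _ (Real.exp_pos s)
  have Lm : Monotone L := fun a b hab =>
    Real.log_le_log (Hp _) (hm _ _ (Real.exp_pos a) (Real.exp_le_exp.mpr hab))
  have step : ∀ p q C, q < p → 0 < C → L (p - C) + L q = L p + L (q - C) := by
    intro p q C h1 h2
    simp only [hL]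
    rw [← Real.log_mul (Hp _).ne' (Hp _).ne', ← Real.log_mul (Hp _).ne' (Hp _).ne',
      H_mult hF h0 hp hm h1 h2]
  have step2 : ∀ x C, 0 < C → L (x + C) - L x = L C - L 0 := by
    intro x C hC
    rcases lt_trichotomy x 0 with h | h | h
    · have := step C (x + C) C (by linarith) hC
      simp only [sub_self, add_sub_cancel_right] at this
      linarith
    · rw [h, zero_add]
    · have := step (x + C) C C (by linarith) hC
      simp only [sub_self, add_sub_cancel_right] at this
      linarith
  have step3 : ∀ x C, L (x + C) - L x = L C - L 0 := by
    intro x C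
    rcases lt_trichotomy C 0 with h | h | h
    · have h1 := step2 (x + C) (-C) (by linarith)
      have h2 := step2 C (-C) (by linarith)
      rw [add_neg_cancel_right] at h1
      rw [add_neg_cancel] at h2
      linarith
    · simp [h]
    · exact step2 x C h
  let A : ℝ →+ ℝ :=
    { toFun := fun x => L x - L 0
      map_zero' := by simp
      map_add' := fun x y => by have := step3 x y; linarith }
  have Am : Measurable A := Lm.measurable.sub_const _
  have Ac : Continuous A := MeasureTheory.Measure.AddMonoidHom.continuous_of_measurable A Am
  have lin : ∀ x, L x - L 0 = x * (L 1 - L 0) := by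
    intro x
    have := map_real_smul A Ac x 1
    simpa [A] using this
  refine ⟨F (Real.exp 0), L 1 - L 0, Hp 0, sub_nonneg.mpr (Lm zero_le_one), ?_⟩
  intro x hx
  have := lin (Real.log x)
  have h1 : L (Real.log x) = Real.log (F x) := by simp only [hL]; rw [Real.exp_log hx]
  have h2 : F x = Real.exp (L 0 + Real.log x * (L 1 - L 0)) := by
    rw [← this, h1, add_sub_cancel, Real.exp_log (hp x hx)]
  rw [h2, Real.exp_add, Real.rpow_def_of_pos hx]
  congr 1
  simp only [hL]
  rw [Real.exp_log (Hp 0)]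

end

end TNP

namespace TNP
open MeasureTheory Filter Topology

lemma no_lt_one {F : ℝ → ℝ} (hF : ∀ Λ : ℝ → ℝ, IsPolyaFrequencyFunction Λ → IsTNFun (F ∘ Λ))
    (h0 : F 0 = 0) {c α : ℝ} (hc : 0 < c) (hα0 : 0 < α) (hα1 : α < 1)
    (hx : ∀ x, 0 < x → F x = c * x ^ α) : False := by
  have hK := (hF _ pf_p3).2
  have h := tn3_raw hK (a := 2) (b := 3) (c := 4) (d := 0) (e := 1) (g := 2)
    (by norm_num) (by norm_num) (by norm_num) (by norm_num)
  norm_num [Function.comp, os] at h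
  have z : p3 0 = 0 := by simp [p3]
  rw [z, h0] at h
  obtain ⟨E, hE⟩ : ∃ E, E = Real.exp (-1) := ⟨_, rfl⟩
  have hE0 : 0 < E := hE ▸ Real.exp_pos _
  have hE1 : E < 1 := by rw [hE, Real.exp_lt_one_iff]; norm_num
  have hp : ∀ n : ℕ, p3 n = E ^ n - E ^ (3 * n) := by
    intro n
    rw [p3, hE, ← Real.exp_nat_mul, ← Real.exp_nat_mul]
    push_cast
    congr 2 <;> ring_nf
  obtain ⟨p, hpE⟩ : ∃ p, p = E ^ 2 := ⟨_, rfl⟩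
  have hp0 : 0 < p := by rw [hpE]; positivity
  have hp1 : p < 1 := by rw [hpE]; nlinarith
  have h1p : 0 < 1 - p := by linarith
  have e1 : p3 1 = E * (1 - p) := by have := hp 1; push_cast at this; rw [this, hpE]; ring
  have e2 : p3 2 = E ^ 2 * (1 - p) * (1 + p) := by
    have := hp 2; push_cast at this; rw [this, hpE]; ring
  have e3 : p3 3 = E ^ 3 * (1 - p) * (1 + p + p ^ 2) := by
    have := hp 3; push_cast at this; rw [this, hpE]; ring
  have e4 : p3 4 = E ^ 4 * (1 - p) * (1 + p) * (1 + p ^ 2) := by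
    have := hp 4; push_cast at this; rw [this, hpE]; ring
  have hpw : ∀ n : ℕ, (E ^ n) ^ α = (E ^ α) ^ n := by
    intro n
    rw [← Real.rpow_natCast, ← Real.rpow_natCast, ← Real.rpow_mul hE0.le, ← Real.rpow_mul hE0.le, mul_comm]
  have g1 : F (p3 1) = c * (E ^ α * (1 - p) ^ α) := by
    rw [e1, hx _ (by positivity), Real.mul_rpow (by positivity) (by positivity)]
  have g2 : F (p3 2) = c * ((E ^ α) ^ 2 * (1 - p) ^ α * (1 + p) ^ α) := by
    rw [e2, hx _ (by positivity), Real.mul_rpow (by positivity) (by positivity),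
      Real.mul_rpow (by positivity) (by positivity), hpw]
  have g3 : F (p3 3) = c * ((E ^ α) ^ 3 * (1 - p) ^ α * (1 + p + p ^ 2) ^ α) := by
    rw [e3, hx _ (by positivity), Real.mul_rpow (by positivity) (by positivity),
      Real.mul_rpow (by positivity) (by positivity), hpw]
  have g4 : F (p3 4) = c * ((E ^ α) ^ 4 * (1 - p) ^ α * (1 + p) ^ α * (1 + p ^ 2) ^ α) := by
    rw [e4, hx _ (by positivity), Real.mul_rpow (by positivity) (by positivity),
      Real.mul_rpow (by positivity) (by positivity),
      Real.mul_rpow (by positivity) (by positivity), hpw]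
  rw [g1, g2, g3, g4] at h
  have he : 0 < E ^ α := by positivity
  have hd : 0 < (1 - p) ^ α := by positivity
  have hA : 0 < (1 + p) ^ α := by positivity
  have hsc := (Real.strictConcaveOn_rpow hα0 hα1).2 (Set.mem_Ici.2 (by positivity : 0 ≤ (1 + p) ^ 2))
    (Set.mem_Ici.2 (by positivity : 0 ≤ 1 + p ^ 2)) (by intro h; nlinarith)
    (by norm_num : (0:ℝ) < 1 / 2) (by norm_num : (0:ℝ) < 1 / 2) (by norm_num)
  have hm : (1 / 2 : ℝ) • (1 + p) ^ 2 + (1 / 2 : ℝ) • (1 + p ^ 2) = 1 + p + p ^ 2 := by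
    simp only [smul_eq_mul]; ring
  rw [hm] at hsc
  have hsq : ((1 + p) ^ 2) ^ α = ((1 + p) ^ α) ^ 2 := by
    rw [← Real.rpow_natCast, ← Real.rpow_natCast, ← Real.rpow_mul (by positivity),
      ← Real.rpow_mul (by positivity), mul_comm]
  simp only [hsq, smul_eq_mul] at hsc
  generalize E ^ α = e at *
  generalize (1 - p) ^ α = d at *
  generalize (1 + p) ^ α = A at *
  generalize (1 + p + p ^ 2) ^ α = B at *
  generalize (1 + p ^ 2) ^ α = D at *
  have key : 0 ≤ (c ^ 3 * e ^ 6 * d ^ 3 * A) * (A ^ 2 + D - 2 * B) := by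
    linear_combination h
  have := nonneg_of_mul_nonneg_right key (by positivity)
  linarith

lemma taylor2 (α : ℝ) : (fun u : ℝ => (1 + u) ^ α - (1 + α * u + α * (α - 1) / 2 * u ^ 2))
    =O[𝓝 0] fun u => u ^ 3 := by
  have h := (Real.one_add_rpow_hasFPowerSeriesAt_zero (a := α)).isBigO_sub_partialSum_pow 3
  have c2 : Ring.choose α 2 = α * (α - 1) / 2 := by
    have := Ring.descPochhammer_eq_factorial_smul_choose α 2
    simp [descPochhammer_succ_left, Nat.factorial] at this
    rw [Polynomial.smeval_mul, Polynomial.smeval_sub, Polynomial.smeval_X, Polynomial.smeval_one] at this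
    simp at this
    linarith
  simp only [zero_add, FormalMultilinearSeries.partialSum, Finset.sum_range_succ, Finset.sum_range_zero,
    binomialSeries_apply, Ring.choose_zero_right, Ring.choose_one_right, c2] at h
  simp at h
  refine (h.congr_left fun y => by ring).trans ?_
  exact Asymptotics.IsBigO.of_bound 1 (by simp)

lemma mulO (g : ℝ → ℝ) (hg : Continuous g) (n : ℕ) :
    (fun w : ℝ => w ^ n * g w) =O[𝓝 0] fun w => w ^ n := by
  have h1 : g =O[𝓝 0] fun _ => (1:ℝ) := (hg.tendsto 0).isBigO_one ℝ
  simpa using (Asymptotics.isBigO_refl (fun w : ℝ => w ^ n) (𝓝 0)).mul h1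

noncomputable def rr (α w : ℝ) : ℝ := ((1 - w) ^ 2 * (1 + 2 * w)) ^ α -
  (1 - 3 * α * w ^ 2 + 2 * α * w ^ 3 + 9 / 2 * α * (α - 1) * w ^ 4)

lemma rr_O (α : ℝ) : rr α =O[𝓝 0] fun w => w ^ 5 := by
  have hu : Tendsto (fun w : ℝ => -3 * w ^ 2 + 2 * w ^ 3) (𝓝 0) (𝓝 0) := by
    have : Continuous (fun w : ℝ => -3 * w ^ 2 + 2 * w ^ 3) := by fun_prop
    simpa using this.tendsto 0
  have h1 := (taylor2 α).comp_tendsto hu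
  have h2 := h1.trans (((mulO (fun w => w * (-3 + 2 * w) ^ 3) (by fun_prop) 5)).congr_left
    (f₂ := (fun u : ℝ => u ^ 3) ∘ fun w : ℝ => -3 * w ^ 2 + 2 * w ^ 3)
    (fun w => by simp only [Function.comp]; ring))
  refine (h2.add (mulO (fun w => α * (α - 1) / 2 * (-12 + 4 * w)) (by fun_prop) 5)).congr_left ?_
  intro w
  simp only [Function.comp, rr]
  have : 1 + (-3 * w ^ 2 + 2 * w ^ 3) = (1 - w) ^ 2 * (1 + 2 * w) := by ring
  rw [this]
  ring

lemma rr_lim (α k : ℝ) (hk : 0 < k) : Tendsto (fun t => rr α (t * k) / t ^ 4) (𝓝[>] 0) (𝓝 0) := by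
  have h1 : rr α =o[𝓝 0] fun w => w ^ 4 :=
    (rr_O α).trans_isLittleO (Asymptotics.isLittleO_pow_pow (by norm_num))
  have hu : Tendsto (fun t : ℝ => t * k) (𝓝[>] 0) (𝓝 0) := by
    have : Continuous (fun t : ℝ => t * k) := by fun_prop
    simpa using (this.tendsto 0).mono_left nhdsWithin_le_nhds
  have h2 := (h1.comp_tendsto hu).tendsto_div_nhds_zero
  have h3 := h2.mul_const (k ^ 4)
  rw [zero_mul] at h3
  refine h3.congr fun t => ?_
  simp only [Function.comp]
  field_simp

def mu : Fin 4 → ℝ := ![8, 4, 2, 1]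
def nu : Fin 4 → ℝ := ![1, 2, 4, 8]
def ee : Fin 4 → ℕ := ![0, 2, 3, 4]
noncomputable def VV : Matrix (Fin 4) (Fin 4) ℝ := Matrix.of fun i l => mu i ^ ee l
noncomputable def WW : Matrix (Fin 4) (Fin 4) ℝ := Matrix.of fun l j => nu j ^ ee l
noncomputable def dd (α : ℝ) : Fin 4 → ℝ := ![1, -3 * α, 2 * α, 9 / 2 * α * (α - 1)]

lemma VW_det : 0 < VV.det * WW.det := by
  simp [VV, WW, mu, nu, ee, Matrix.det_succ_row_zero, Fin.sum_univ_succ, Fin.succAbove]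
  norm_num

lemma mu_pos (i : Fin 4) : 0 < mu i := by fin_cases i <;> simp [mu]
lemma nu_pos (i : Fin 4) : 0 < nu i := by fin_cases i <;> simp [nu]
lemma mn_le (i j : Fin 4) : mu i * nu j ≤ 64 := by
  fin_cases i <;> fin_cases j <;> norm_num [mu, nu]

lemma det_neg {α : ℝ} (hα : 1 < α) :
    ∀ᶠ t in 𝓝[>] (0:ℝ), (Matrix.of fun i j : Fin 4 =>
      ((1 - t * (mu i * nu j)) ^ 2 * (1 + 2 * (t * (mu i * nu j)))) ^ α).det < 0 := by
  have hV : IsUnit VV.det := by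
    rw [isUnit_iff_ne_zero]; intro h; have := VW_det; simp [h] at this
  have hW : IsUnit WW.det := by
    rw [isUnit_iff_ne_zero]; intro h; have := VW_det; simp [h] at this
  obtain ⟨R, hR⟩ : ∃ R : ℝ → Matrix (Fin 4) (Fin 4) ℝ,
    R = fun t => Matrix.of fun i j => rr α (t * (mu i * nu j)) / t ^ 4 := ⟨_, rfl⟩
  have hRl : Tendsto R (𝓝[>] 0) (𝓝 0) := by
    refine tendsto_pi_nhds.2 fun i => tendsto_pi_nhds.2 fun j => ?_
    rw [hR]
    exact rr_lim α _ (mul_pos (mu_pos i) (nu_pos j))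
  obtain ⟨T, hT⟩ : ∃ T : ℝ → Matrix (Fin 4) (Fin 4) ℝ,
    T = fun t => Matrix.diagonal fun l => t ^ (4 - ee l) := ⟨_, rfl⟩
  have hTc : Continuous T := by rw [hT]; fun_prop
  have hS : Tendsto (fun t => (Matrix.diagonal (dd α) + T t * (VV⁻¹ * R t * WW⁻¹)).det) (𝓝[>] 0)
      (𝓝 (Matrix.diagonal (dd α)).det) := by
    have hN : Tendsto (fun t => T t * (VV⁻¹ * R t * WW⁻¹)) (𝓝[>] 0) (𝓝 (T 0 * (VV⁻¹ * 0 * WW⁻¹))) := by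
      have hc : Continuous fun P : Matrix (Fin 4) (Fin 4) ℝ × Matrix (Fin 4) (Fin 4) ℝ =>
        P.1 * (VV⁻¹ * P.2 * WW⁻¹) := by fun_prop
      exact (hc.tendsto (T 0, 0)).comp
        (((hTc.tendsto 0).mono_left nhdsWithin_le_nhds).prodMk_nhds hRl)
    have hc : Continuous fun P : Matrix (Fin 4) (Fin 4) ℝ => (Matrix.diagonal (dd α) + P).det := by
      fun_prop
    have := (hc.tendsto _).comp hN
    simpa [Function.comp_def] using this
  have hneg : (Matrix.diagonal (dd α)).det < 0 := by
    rw [Matrix.det_diagonal, Fin.prod_univ_four]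
    simp [dd]
    have h1 : 0 < α - 1 := by linarith
    have h2 : 0 < α * (2 * α) * (9 / 2 * α * (α - 1)) := by positivity
    linarith
  filter_upwards [hS.eventually_lt_const hneg, self_mem_nhdsWithin] with t ht ht0
  have ht0 : 0 < t := ht0
  have key : (Matrix.of fun i j : Fin 4 =>
      ((1 - t * (mu i * nu j)) ^ 2 * (1 + 2 * (t * (mu i * nu j)))) ^ α) =
      VV * (Matrix.diagonal (fun l => t ^ ee l) * (Matrix.diagonal (dd α) + T t * (VV⁻¹ * R t * WW⁻¹)))
        * WW := by
    have e1 : Matrix.diagonal (fun l => t ^ ee l) * T t = t ^ 4 • (1 : Matrix (Fin 4) (Fin 4) ℝ) := by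
      rw [hT, Matrix.diagonal_mul_diagonal, Matrix.smul_one_eq_diagonal]
      congr 1
      ext l
      rw [← pow_add]
      fin_cases l <;> simp [ee]
    rw [mul_add, ← mul_assoc (Matrix.diagonal (fun l => t ^ ee l)) (T t), e1, mul_add, add_mul,
      smul_mul_assoc, one_mul, mul_smul_comm, smul_mul_assoc]
    have e2 : VV * (VV⁻¹ * R t * WW⁻¹) * WW = R t := by
      rw [mul_assoc VV⁻¹, ← mul_assoc VV, Matrix.mul_nonsing_inv _ hV, one_mul, mul_assoc,
        Matrix.nonsing_inv_mul _ hW, mul_one]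
    rw [e2, Matrix.diagonal_mul_diagonal]
    ext i j
    rw [hR]
    simp only [Matrix.of_apply, Matrix.add_apply, Matrix.smul_apply, smul_eq_mul, Matrix.mul_apply (N := WW),
      Matrix.mul_diagonal, Fin.sum_univ_four]
    rw [mul_div_cancel₀ _ (by positivity), rr]
    simp [VV, WW, ee, dd]
    ring
  rw [key, Matrix.det_mul, Matrix.det_mul, Matrix.det_mul, Matrix.det_diagonal]
  have hp : 0 < ∏ l, t ^ ee l := Finset.prod_pos fun _ _ => by positivity
  have := VW_det
  have h3 := mul_pos this hp
  nlinarith [mul_neg_of_pos_of_neg h3 ht]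

lemma no_gt_one {F : ℝ → ℝ} (hF : ∀ Λ : ℝ → ℝ, IsPolyaFrequencyFunction Λ → IsTNFun (F ∘ Λ))
    {c α : ℝ} (hc : 0 < c) (hα1 : 1 < α)
    (hx : ∀ x, 0 < x → F x = c * x ^ α) : False := by
  have hK := (hF _ pf_p4).2
  obtain ⟨t, ht, ht2⟩ := ((det_neg hα1).and (Ioo_mem_nhdsGT (show (0:ℝ) < 1 / 64 by norm_num))).exists
  obtain ⟨ht0, ht1⟩ := ht2
  have hmu : StrictAnti mu := by
    intro i j hij; fin_cases i <;> fin_cases j <;> simp_all [mu] <;> norm_num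
  have hnu : StrictMono nu := by
    intro i j hij; fin_cases i <;> fin_cases j <;> simp_all [nu] <;> norm_num
  have h := hK 4 (fun i => -Real.log (t * mu i)) (fun j => Real.log (nu j))
    (by
      intro i j hij
      have := hmu hij
      exact neg_lt_neg (Real.log_lt_log (mul_pos ht0 (mu_pos j)) (by gcongr)))
    (by
      intro i j hij
      exact Real.log_lt_log (nu_pos i) (hnu hij))
  have key : (Matrix.of fun i j : Fin 4 => (F ∘ os p4) (-Real.log (t * mu i) - Real.log (nu j))) =
      Matrix.diagonal (fun i => c * (t * mu i) ^ α) * (Matrix.of fun i j : Fin 4 =>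
      ((1 - t * (mu i * nu j)) ^ 2 * (1 + 2 * (t * (mu i * nu j)))) ^ α) *
      Matrix.diagonal (fun j => (nu j) ^ α) := by
    ext i j
    rw [Matrix.mul_diagonal, Matrix.diagonal_mul]
    simp only [Matrix.of_apply, Function.comp]
    have hm := mu_pos i
    have hn := nu_pos j
    have hle := mn_le i j
    have hw : Real.exp (-(-Real.log (t * mu i) - Real.log (nu j))) = t * (mu i * nu j) := by
      rw [neg_sub, sub_neg_eq_add, Real.exp_add, Real.exp_log hn, Real.exp_log (by positivity)]; ring
    have hw1 : t * (mu i * nu j) < 1 := by nlinarith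
    have hpos : 0 < -Real.log (t * mu i) - Real.log (nu j) := by
      rw [← hw, Real.exp_lt_one_iff] at hw1; linarith
    rw [os, if_pos hpos.le, hx _ (p4_pos hpos), p4_eq, hw]
    have h1 : 0 < 1 - t * (mu i * nu j) := by linarith
    rw [Real.mul_rpow (by positivity) (by positivity)]
    rw [← mul_assoc t, Real.mul_rpow (x := t * mu i) (by positivity) (by positivity)]
    ring
  rw [key, Matrix.det_mul, Matrix.det_mul, Matrix.det_diagonal, Matrix.det_diagonal] at h
  have h1 : 0 < ∏ i, c * (t * mu i) ^ α := Finset.prod_pos fun i _ => by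
    have := mu_pos i; positivity
  have h2 : 0 < ∏ j, (nu j) ^ α := Finset.prod_pos fun j _ => by
    have := nu_pos j; positivity
  have := mul_neg_of_neg_of_pos (mul_neg_of_pos_of_neg h1 ht) h2
  linarith

end TNP

theorem stmt_15 (F : ℝ → ℝ) (hF0 : ∀ x : ℝ, 0 ≤ x → 0 ≤ F x)
    (hFne : ∃ x : ℝ, 0 ≤ x ∧ F x ≠ 0) :
    List.TFAE
      [∀ f : ℝ → ℝ, IsTNFun f → (∃ a b : ℝ, a ≠ b ∧ f a ≠ 0 ∧ f b ≠ 0) →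
          IsTNFun (F ∘ f),
       ∀ Λ : ℝ → ℝ, IsPolyaFrequencyFunction Λ → IsTNFun (F ∘ Λ),
       ∃ c : ℝ, 0 < c ∧
         ((∀ x : ℝ, 0 ≤ x → F x = c) ∨
          (∀ x : ℝ, 0 ≤ x → F x = c * x) ∨
          (∀ x : ℝ, 0 ≤ x → F x = if 0 < x then c else 0) ∨
          (∀ x : ℝ, 0 ≤ x → F x = if x = 0 then c else 0))] ∧
    ((∀ f : ℝ → ℝ, IsTNFun f → IsTNFun (F ∘ f)) ↔
      ∃ c : ℝ, 0 < c ∧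
        ((∀ x : ℝ, 0 ≤ x → F x = c) ∨
         (∀ x : ℝ, 0 ≤ x → F x = c * x) ∨
         (∀ x : ℝ, 0 ≤ x → F x = if 0 < x then c else 0))) := by
  have h23 : (∀ Λ : ℝ → ℝ, IsPolyaFrequencyFunction Λ → IsTNFun (F ∘ Λ)) →
      ∃ c : ℝ, 0 < c ∧
         ((∀ x : ℝ, 0 ≤ x → F x = c) ∨
          (∀ x : ℝ, 0 ≤ x → F x = c * x) ∨
          (∀ x : ℝ, 0 ≤ x → F x = if 0 < x then c else 0) ∨
          (∀ x : ℝ, 0 ≤ x → F x = if x = 0 then c else 0)) := by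
    intro hF
    by_cases hp : ∃ t0, 0 < t0 ∧ 0 < F t0
    · obtain ⟨t0, ht0, hFt⟩ := hp
      have hpos : ∀ x, 0 < x → 0 < F x := fun x hx => TNP.F_dich hF0 hF ht0 hx hFt
      rcases (hF0 0 le_rfl).eq_or_lt with h0 | h0
      · obtain ⟨c, α, hc, hα, hx⟩ := TNP.F_pow hF h0.symm hpos
          (fun s t hs hst => TNP.F_mono hF0 hF hs hst)
        refine ⟨c, hc, ?_⟩
        rcases hα.eq_or_lt with rfl | hα0
        · right; right; left
          intro x hx0
          rcases hx0.eq_or_lt with rfl | hx0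
          · simp [← h0]
          · rw [hx x hx0, if_pos hx0, Real.rpow_zero, mul_one]
        rcases lt_trichotomy α 1 with h1 | rfl | h1
        · exact (TNP.no_lt_one hF h0.symm hc hα0 h1 hx).elim
        · right; left
          intro x hx0
          rcases hx0.eq_or_lt with rfl | hx0
          · simp [← h0]
          · rw [hx x hx0, Real.rpow_one]
        · exact (TNP.no_gt_one hF hc h1 hx).elim
      · refine ⟨F 0, h0, Or.inl ?_⟩
        intro x hx0
        rcases hx0.eq_or_lt with rfl | hx0
        · rfl
        · exact TNP.F_const hF h0 hpos hx0
    · push Not at hp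
      have hz : ∀ x, 0 < x → F x = 0 := fun x hx => le_antisymm (hp x hx) (hF0 x hx.le)
      obtain ⟨x, hx0, hx⟩ := hFne
      have hxe : x = 0 := by
        rcases hx0.eq_or_lt with h | h
        · exact h.symm
        · exact absurd (hz x h) hx
      subst hxe
      refine ⟨F 0, lt_of_le_of_ne (hF0 0 le_rfl) hx.symm, Or.inr (Or.inr (Or.inr ?_))⟩
      intro y hy
      rcases hy.eq_or_lt with rfl | hy
      · simp
      · rw [hz y hy, if_neg hy.ne']
  have h12 : (∀ f : ℝ → ℝ, IsTNFun f → (∃ a b : ℝ, a ≠ b ∧ f a ≠ 0 ∧ f b ≠ 0) →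
          IsTNFun (F ∘ f)) → ∀ Λ : ℝ → ℝ, IsPolyaFrequencyFunction Λ → IsTNFun (F ∘ Λ) :=
    fun h Λ hΛ => h Λ (TNP.pf_tn hΛ) hΛ.2.2.1
  refine ⟨?_, ?_, ?_⟩
  · tfae_have 1 → 2 := h12
    tfae_have 2 → 3 := h23
    tfae_have 3 → 1 := fun ⟨c, hc, h⟩ f hf h2 => TNP.three_one hc h hf h2
    tfae_finish
  · intro hall
    obtain ⟨c, hc, h | h | h | h⟩ := h23 (h12 fun f hf _ => hall f hf)
    · exact ⟨c, hc, Or.inl h⟩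
    · exact ⟨c, hc, Or.inr (Or.inl h)⟩
    · exact ⟨c, hc, Or.inr (Or.inr h)⟩
    · exact (TNP.not_four hc h hall).elim
  · rintro ⟨c, hc, h⟩ f hf
    exact TNP.more_back hc h hf
end
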